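/- arXiv:2204.12609 — 8 statements merged into one kernel-verified Lean document; each statement's English description precedes it below -/
import Mathlib

section
/- Let q ≥ 1 and let k_1, …, k_q be integers with k_i ≥ 3 for all i and k_1 + ⋯ + k_q = n. Then Σ_{i=1}^{q} (k_i mod 3) ≤ 2⌈n/5⌉. -/
/-!
Write the modulus as `m + 1`. A number `k > m` with remainder `r` satisfies `k ≥ m + 1 + r`, and
`r ≤ m`, so `r / k ≤ r / (m + 1 + r) ≤ m / (2 * m + 1)`: the worst case is `k = 2 * m + 1`.
For modulus `3` the worst case is `k = 5` with remainder `2`.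
-/

theorem two_mul_add_one_mul_mod_add_one_le {m k : ℕ} (hk : m < k) :
    (2 * m + 1) * (k % (m + 1)) ≤ m * k := by
  have mod_le : k % (m + 1) ≤ m := Nat.le_of_lt_succ (Nat.mod_lt k m.succ_pos)
  have add_mod_le : m + 1 + k % (m + 1) ≤ k := by
    rw [Nat.mod_eq_sub_mod hk]
    exact Nat.add_le_of_le_sub' hk (Nat.mod_le _ _)
  calc (2 * m + 1) * (k % (m + 1))
      = (m + 1) * (k % (m + 1)) + m * (k % (m + 1)) := by ring
    _ ≤ (m + 1) * m + m * (k % (m + 1)) := by gcongr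
    _ = m * (m + 1 + k % (m + 1)) := by ring
    _ ≤ m * k := by gcongr

theorem two_mul_add_one_mul_sum_mod_add_one_le {ι : Type*} {s : Finset ι} {k : ι → ℕ} {m : ℕ}
    (hk : ∀ i ∈ s, m < k i) :
    (2 * m + 1) * ∑ i ∈ s, k i % (m + 1) ≤ m * ∑ i ∈ s, k i := by
  simp only [Finset.mul_sum]
  exact Finset.sum_le_sum fun i hi => two_mul_add_one_mul_mod_add_one_le (hk i hi)

theorem le_mul_ceil_div_of_mul_le_mul {K : Type*} [Field K] [LinearOrder K] [IsStrictOrderedRing K]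
    [FloorRing K] {a b c d : K} (hc : 0 ≤ c) (hd : 0 < d) (h : d * a ≤ c * b) :
    a ≤ c * ⌈b / d⌉ :=
  calc a ≤ c * b / d := (le_div_iff₀' hd).mpr h
    _ = c * (b / d) := mul_div_assoc c b d
    _ ≤ c * ⌈b / d⌉ := mul_le_mul_of_nonneg_left (Int.le_ceil _) hc

theorem sum_mod_three_le_two_ceil_n_div_five_general {ι : Type*} (s : Finset ι) (k : ι → ℕ) (m : ℕ)
    (hk : ∀ i ∈ s, m < k i) :
    ((∑ i ∈ s, k i % (m + 1) : ℕ) : ℤ) ≤ m * ⌈((∑ i ∈ s, k i : ℕ) : ℚ) / (2 * m + 1)⌉ := by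
  have cast_le : (2 * m + 1 : ℚ) * (∑ i ∈ s, k i % (m + 1) : ℕ) ≤ m * (∑ i ∈ s, k i : ℕ) :=
    mod_cast two_mul_add_one_mul_sum_mod_add_one_le hk
  rw [← Int.cast_le (R := ℚ), Int.cast_mul, Int.cast_natCast, Int.cast_natCast]
  exact le_mul_ceil_div_of_mul_le_mul m.cast_nonneg (by positivity) cast_le

/-- Let `q ≥ 1` and let `k 1, …, k q` be integers with `k i ≥ 3` for all `i`
and `k 1 + ⋯ + k q = n`. Then `Σ (k i mod 3) ≤ 2⌈n/5⌉`. -/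
theorem sum_mod_three_le_two_ceil_n_div_five (q n : ℕ) (hq : 1 ≤ q) (k : Fin q → ℕ)
    (h3 : ∀ i, 3 ≤ k i) (hsum : ∑ i, k i = n) :
    ((∑ i, k i % 3 : ℕ) : ℤ) ≤ 2 * ⌈(n : ℚ) / 5⌉ := by
  have h := sum_mod_three_le_two_ceil_n_div_five_general Finset.univ k 2 fun i _ => h3 i
  have denominator_eq_five : 2 * ((2 : ℕ) : ℚ) + 1 = 5 := by norm_num
  rw [hsum, denominator_eq_five] at h
  exact h
end

section
/- Let n ≥ 3. Among all finite multisets K = {k_1, …, k_q} of integers with every k_i ≥ 3 and Σ k_i = n, the function l(K) = Σ_i (k_i mod 3) attains its maximum at some multiset containing at least ⌊n/5⌋ − 1 elements equal to 5. -/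
/-!
Call the parts of a multiset blocks, and let the modulus be `m + 1`. A block `k ≥ m + 1` with
remainder `r` has `k ≥ m + 1 + r` and `r ≤ m`, whence `(2 * m + 1) * r ≤ m * k`, with equality at
`k = 2 * m + 1`. Summing, the total remainder is at most `m / (2 * m + 1)` times the total, and it
is determined modulo `m + 1` by the total. So a multiset is optimal as soon as it falls short of
this bound by less than `m + 1`. Blocks `2 * m + 1` cause no shortfall, and a single further block
`k < 3 * m + 2` causes less than `m + 1`; modulus `3` gives the blocks of size `5`.
-/

variable {m k : ℕ}

theorem mul_mod_succ_le_mul (hk : m + 1 ≤ k) : (2 * m + 1) * (k % (m + 1)) ≤ m * k := by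
  have hle : m + 1 + k % (m + 1) ≤ k := by
    rw [Nat.mod_eq_sub_mod hk]
    have := Nat.mod_le (k - (m + 1)) (m + 1)
    omega
  have hrem : k % (m + 1) ≤ m := Nat.lt_succ_iff.mp (Nat.mod_lt k m.succ_pos)
  calc (2 * m + 1) * (k % (m + 1))
      = m * (k % (m + 1)) + (m + 1) * (k % (m + 1)) := by ring
    _ ≤ m * (k % (m + 1)) + (m + 1) * m := by gcongr
    _ = m * (m + 1 + k % (m + 1)) := by ring
    _ ≤ m * k := by gcongr

theorem mul_lt_mul_mod_succ_add (hk : k < 3 * m + 2) :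
    m * k < (2 * m + 1) * (k % (m + 1) + (m + 1)) := by
  obtain hlt | hle := lt_or_ge k (2 * (m + 1))
  · have hrem : k ≤ k % (m + 1) + (m + 1) := by
      have hquot : k / (m + 1) ≤ 1 := Nat.lt_succ_iff.mp (Nat.div_lt_of_lt_mul (by omega))
      calc k = k % (m + 1) + (m + 1) * (k / (m + 1)) := (Nat.mod_add_div k (m + 1)).symm
        _ ≤ k % (m + 1) + (m + 1) * 1 := by gcongr
        _ = k % (m + 1) + (m + 1) := by rw [mul_one]
    calc m * k ≤ m * (k % (m + 1) + (m + 1)) := by gcongr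
      _ < (2 * m + 1) * (k % (m + 1) + (m + 1)) := by
          gcongr
          omega
  · obtain ⟨r, rfl⟩ := Nat.exists_eq_add_of_le' hle
    have hrem : (r + 2 * (m + 1)) % (m + 1) = r := by
      rw [Nat.add_mul_mod_self_right, Nat.mod_eq_of_lt (by omega)]
    calc m * (r + 2 * (m + 1))
        < m * (r + 2 * (m + 1)) + (m + 1) * (r + 1) := Nat.lt_add_of_pos_right (by positivity)
      _ = (2 * m + 1) * (r + (m + 1)) := by ring
      _ = (2 * m + 1) * ((r + 2 * (m + 1)) % (m + 1) + (m + 1)) := by rw [hrem]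

theorem mul_sum_map_mod_succ_le_mul_sum {K : Multiset ℕ} (hK : ∀ k ∈ K, m + 1 ≤ k) :
    (2 * m + 1) * (K.map (· % (m + 1))).sum ≤ m * K.sum := by
  calc (2 * m + 1) * (K.map (· % (m + 1))).sum
      = (K.map fun k ↦ (2 * m + 1) * (k % (m + 1))).sum := Multiset.sum_map_mul_left.symm
    _ ≤ (K.map fun k ↦ m * k).sum :=
        Multiset.sum_map_le_sum_map _ _ fun k hk ↦ mul_mod_succ_le_mul (hK k hk)
    _ = m * K.sum := by rw [Multiset.sum_map_mul_left, Multiset.map_id']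

theorem sum_map_mod_succ_le_of_mul_sum_lt {K K' : Multiset ℕ} (hK' : ∀ k ∈ K', m + 1 ≤ k)
    (hsum : K'.sum = K.sum)
    (hK : m * K.sum < (2 * m + 1) * ((K.map (· % (m + 1))).sum + (m + 1))) :
    (K'.map (· % (m + 1))).sum ≤ (K.map (· % (m + 1))).sum := by
  have hmod : (K'.map (· % (m + 1))).sum ≡ (K.map (· % (m + 1))).sum [MOD m + 1] := by
    rw [Nat.ModEq, ← Multiset.sum_nat_mod, ← Multiset.sum_nat_mod, hsum]
  have hlt : (K'.map (· % (m + 1))).sum < (K.map (· % (m + 1))).sum + (m + 1) := by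
    refine Nat.lt_of_mul_lt_mul_left (a := 2 * m + 1) ?_
    calc (2 * m + 1) * (K'.map (· % (m + 1))).sum
        ≤ m * K'.sum := mul_sum_map_mod_succ_le_mul_sum hK'
      _ = m * K.sum := by rw [hsum]
      _ < (2 * m + 1) * ((K.map (· % (m + 1))).sum + (m + 1)) := hK
  exact hmod.le_of_lt_add hlt

theorem sum_map_mod_succ_cons_replicate (m k q : ℕ) :
    ((k ::ₘ Multiset.replicate q (2 * m + 1)).map (· % (m + 1))).sum = k % (m + 1) + q * m := by
  have hmod : (2 * m + 1) % (m + 1) = m := by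
    rw [two_mul, add_assoc, Nat.add_mod_right, Nat.mod_eq_of_lt m.lt_succ_self]
  rw [Multiset.map_cons, Multiset.map_replicate, Multiset.sum_cons, Multiset.sum_replicate, hmod,
    smul_eq_mul]

theorem sum_map_mod_succ_le_cons_replicate (hk : k < 3 * m + 2) (q : ℕ) {K : Multiset ℕ}
    (hK : ∀ j ∈ K, m + 1 ≤ j) (hsum : K.sum = k + q * (2 * m + 1)) :
    (K.map (· % (m + 1))).sum ≤
      ((k ::ₘ Multiset.replicate q (2 * m + 1)).map (· % (m + 1))).sum := by
  have hsum' : (k ::ₘ Multiset.replicate q (2 * m + 1)).sum = k + q * (2 * m + 1) := by simp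
  refine sum_map_mod_succ_le_of_mul_sum_lt hK (hsum.trans hsum'.symm) ?_
  rw [sum_map_mod_succ_cons_replicate, hsum']
  calc m * (k + q * (2 * m + 1))
      = m * k + (2 * m + 1) * (q * m) := by ring
    _ < (2 * m + 1) * (k % (m + 1) + (m + 1)) + (2 * m + 1) * (q * m) :=
        Nat.add_lt_add_right (mul_lt_mul_mod_succ_add hk) _
    _ = (2 * m + 1) * (k % (m + 1) + q * m + (m + 1)) := by ring

theorem exists_max_sum_mod_three_with_many_fives_general (m n : ℕ) (hn : m + 1 ≤ n) :
    ∃ K : Multiset ℕ, (∀ k ∈ K, m + 1 ≤ k) ∧ K.sum = n ∧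
      (∀ K' : Multiset ℕ, (∀ k ∈ K', m + 1 ≤ k) → K'.sum = n →
        (K'.map (· % (m + 1))).sum ≤ (K.map (· % (m + 1))).sum) ∧
      n / (2 * m + 1) ≤ K.count (2 * m + 1) + 1 := by
  obtain ⟨d, rfl⟩ := Nat.exists_eq_add_of_le hn
  set q := d / (2 * m + 1)
  set r := d % (2 * m + 1)
  have hr : r < 2 * m + 1 := Nat.mod_lt d (2 * m).succ_pos
  have hd : r + q * (2 * m + 1) = d := Nat.mod_add_div' d (2 * m + 1)
  refine ⟨(m + 1 + r) ::ₘ Multiset.replicate q (2 * m + 1), ?_, by simp [add_assoc, hd], ?_, ?_⟩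
  · intro k hk
    obtain rfl | hk := Multiset.mem_cons.mp hk
    · omega
    · rw [Multiset.eq_of_mem_replicate hk]
      omega
  · intro K' hK' hsum
    exact sum_map_mod_succ_le_cons_replicate (by omega) q hK' (by rw [hsum, add_assoc _ r, hd])
  · calc (m + 1 + d) / (2 * m + 1)
        ≤ (d + (2 * m + 1)) / (2 * m + 1) := Nat.div_le_div_right (by omega)
      _ = (Multiset.replicate q (2 * m + 1)).count (2 * m + 1) + 1 := by
          rw [Nat.add_div_right d (2 * m).succ_pos, Multiset.count_replicate_self]
      _ ≤ ((m + 1 + r) ::ₘ Multiset.replicate q (2 * m + 1)).count (2 * m + 1) + 1 :=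
          Nat.succ_le_succ (Multiset.count_le_count_cons _ _ _)

/-- for `n ≥ 3`, among all finite multisets `K` of integers `≥ 3` summing
to `n`, the function `l(K) = Σ (k mod 3)` attains its maximum at some multiset containing
at least `⌊n/5⌋ - 1` elements equal to `5`. -/
theorem exists_max_sum_mod_three_with_many_fives (n : ℕ) (hn : 3 ≤ n) :
    ∃ K : Multiset ℕ, (∀ k ∈ K, 3 ≤ k) ∧ K.sum = n ∧
      (∀ K' : Multiset ℕ, (∀ k ∈ K', 3 ≤ k) → K'.sum = n →
        (K'.map (· % 3)).sum ≤ (K.map (· % 3)).sum) ∧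
      (n : ℤ) / 5 - 1 ≤ (K.count 5 : ℤ) := by
  obtain ⟨K, hK, hsum, hmax, (hcount : n / 5 ≤ K.count 5 + 1)⟩ :=
    exists_max_sum_mod_three_with_many_fives_general 2 n hn
  exact ⟨K, hK, hsum, hmax, by omega⟩
end

section
/- Let q ≥ 1 and let k_1, …, k_q be integers with k_i ≥ 3 for all i and k_1 + ⋯ + k_q = n. Then Σ_{i=1}^{q} ⌊k_i/3⌋ ≥ ⌈(n − 2⌈n/5⌉)/3⌉. -/
/-!
If `k = m * t + r` with `t ≥ 1` and `r ≤ m - 1`, then `r ≤ (m - 1) * t`, so `k ≤ (2 * m - 1) * t`.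
Summing over the parts, `S = ∑ ⌊k i / m⌋` satisfies `n / (2 * m - 1) ≤ S`, hence
`⌈n / (2 * m - 1)⌉ ≤ S` since `S` is an integer. This is already stronger than the claim, because
`x - (c - b) * ⌈x / c⌉ ≤ b * ⌈x / c⌉` whenever `0 < c`; take `b = m` and `c = 2 * m - 1`, with
`m = 3`.
-/

section Nat

variable {m : ℕ}

theorem add_div_le_two_mul_mul_div {k : ℕ} (hm : 0 < m) (hk : m ≤ k) :
    k + k / m ≤ 2 * m * (k / m) := by
  have quotient_pos : 0 < k / m := Nat.div_pos hk hm
  have lt_next_multiple : k < m * (k / m + 1) := Nat.lt_mul_div_succ k hm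
  have add_le_mul_add_one : m + k / m ≤ m * (k / m) + 1 := by nlinarith
  linarith

theorem sum_add_sum_div_le_two_mul_mul_sum_div {ι : Type*} {s : Finset ι} {k : ι → ℕ}
    (hm : 0 < m) (hk : ∀ i ∈ s, m ≤ k i) :
    ∑ i ∈ s, k i + ∑ i ∈ s, k i / m ≤ 2 * m * ∑ i ∈ s, k i / m := by
  rw [← Finset.sum_add_distrib, Finset.mul_sum]
  exact Finset.sum_le_sum fun i hi ↦ add_div_le_two_mul_mul_div hm (hk i hi)

end Nat

section FloorRing

variable {K : Type*} [Field K] [LinearOrder K] [IsStrictOrderedRing K] [FloorRing K]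

theorem ceil_sub_mul_ceil_div_div_le {b c : K} (hb : 0 < b) (hc : 0 < c) (x : K) :
    ⌈(x - (c - b) * ⌈x / c⌉) / b⌉ ≤ ⌈x / c⌉ := by
  have le_ceil_mul : x ≤ ⌈x / c⌉ * c := (div_le_iff₀ hc).mp (Int.le_ceil _)
  rw [Int.ceil_le, div_le_iff₀ hb]
  linarith

theorem ceil_sum_div_le_sum_div {ι : Type*} {s : Finset ι} {k : ι → ℕ} {m : ℕ}
    (hm : 0 < m) (hk : ∀ i ∈ s, m ≤ k i) :
    ⌈((∑ i ∈ s, k i : ℕ) : K) / (2 * m - 1)⌉ ≤ ((∑ i ∈ s, k i / m : ℕ) : ℤ) := by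
  have one_le_m : (1 : K) ≤ m := by exact_mod_cast hm
  have sum_bound : ((∑ i ∈ s, k i : ℕ) : K) + (∑ i ∈ s, k i / m : ℕ) ≤
      2 * m * (∑ i ∈ s, k i / m : ℕ) := by
    exact_mod_cast sum_add_sum_div_le_two_mul_mul_sum_div hm hk
  rw [Int.ceil_le, Int.cast_natCast, div_le_iff₀ (by linarith)]
  linarith

theorem sum_div_three_ge_general {ι : Type*} {s : Finset ι} {k : ι → ℕ} {m n : ℕ}
    (hm : 0 < m) (hk : ∀ i ∈ s, m ≤ k i) (hsum : ∑ i ∈ s, k i = n) :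
    ⌈((n : K) - (m - 1) * ⌈(n : K) / (2 * m - 1)⌉) / m⌉ ≤ ((∑ i ∈ s, k i / m : ℕ) : ℤ) := by
  subst hsum
  have one_le_m : (1 : K) ≤ m := by exact_mod_cast hm
  have coeff : (m - 1 : K) = (2 * m - 1) - m := by ring
  rw [coeff]
  exact (ceil_sub_mul_ceil_div_div_le (by linarith) (by linarith) _).trans
    (ceil_sum_div_le_sum_div hm hk)

end FloorRing

/-- Let `q ≥ 1` and let `k 1, …, k q` be integers with `k i ≥ 3` for all `i`
and `k 1 + ⋯ + k q = n`. Then `Σ ⌊k i / 3⌋ ≥ ⌈(n - 2⌈n/5⌉)/3⌉`. -/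
theorem sum_div_three_ge (q n : ℕ) (hq : 1 ≤ q) (k : Fin q → ℕ)
    (h3 : ∀ i, 3 ≤ k i) (hsum : ∑ i, k i = n) :
    ⌈((n : ℚ) - 2 * (⌈(n : ℚ) / 5⌉ : ℚ)) / 3⌉ ≤ ((∑ i, k i / 3 : ℕ) : ℤ) := by
  convert sum_div_three_ge_general (K := ℚ) three_pos (fun i _ ↦ h3 i) hsum using 4 <;> norm_num
end

section
/- Let G be a finite simple graph on n vertices and let F be a 2-factor of G. Then there exists a spanning subgraph H of F (obtained from F by deleting edges only) such that every connected component of H contains at least 3 vertices and H has at least ⌈(n − 2⌈n/5⌉)/3⌉ connected components. -/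
/-!
Each cycle minus one edge is a path on at least three vertices. From a path on at least `2 * k`
vertices one can cut off its first `k` vertices and still keep at least `k`, so every cycle breaks
into paths on three, four or five vertices. Hence there are at least `n / 5` components, and
`(n - 2 * ⌈n / 5⌉) / 3 ≤ n / 5`.
-/

open SimpleGraph

/-- A 2-factor of a simple graph `G`: a spanning subgraph in which every vertex has
degree exactly 2. -/
def IsTwoFactor {V : Type*} {G : SimpleGraph V} (F : G.Subgraph) : Prop :=
  F.IsSpanning ∧ ∀ v : V, (F.neighborSet v).ncard = 2

/-- A partition of a vertex set into parts that are connected in `K` and whose sizes are at least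
`k` and less than `2 * k`; every path on at least `k` vertices can be cut into such parts. -/
def IsConnectedPartition {V : Type*} [DecidableEq V] (K : SimpleGraph V) (k : ℕ) {s : Finset V}
    (P : Finpartition s) : Prop :=
  ∀ t ∈ P.parts, (K.induce (t : Set V)).Connected ∧ t.card ∈ Set.Ico k (2 * k)

/-- The graph obtained from `K` by deleting the edges that join different parts of `P`. The
vertices outside `s` count as one further part, since `P.part` sends all of them to `∅`. -/
def withinParts {V : Type*} [DecidableEq V] (K : SimpleGraph V) {s : Finset V}
    (P : Finpartition s) : SimpleGraph V :=
  K \ (⊤ : SimpleGraph (Finset V)).comap P.part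

theorem support_take_pred_append_support_drop {V : Type*} {K : SimpleGraph V} {u v : V}
    (p : K.Walk u v) {k : ℕ} (hk : 0 < k) (hkp : k ≤ p.length) :
    (p.take (k - 1)).support ++ (p.drop k).support = p.support := by
  rw [p.support_take, Nat.sub_add_cancel hk, p.drop_support_eq_support_drop_min,
    min_eq_left hkp, List.take_append_drop]

section Partition

variable {V : Type*} [DecidableEq V] {K : SimpleGraph V} {k : ℕ} {s : Finset V}

theorem isConnectedPartition_indiscrete (hs : s ≠ ⊥) (hconn : (K.induce (s : Set V)).Connected)
    (hcard : s.card ∈ Set.Ico k (2 * k)) :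
    IsConnectedPartition K k (Finpartition.indiscrete hs) := by
  intro t ht
  obtain rfl : t = s := Finset.mem_singleton.mp ht
  exact ⟨hconn, hcard⟩

theorem IsConnectedPartition.extend {P : Finpartition s} (hP : IsConnectedPartition K k P)
    {t r : Finset V} (ht : t ≠ ⊥) (hst : Disjoint s t) (hr : s ⊔ t = r)
    (hconn : (K.induce (t : Set V)).Connected) (hcard : t.card ∈ Set.Ico k (2 * k)) :
    IsConnectedPartition K k (P.extend ht hst hr) := by
  intro q hq
  rcases Finset.mem_insert.mp hq with rfl | hq
  · exact ⟨hconn, hcard⟩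
  · exact hP q hq

theorem induce_support_toFinset_connected {u v : V} (p : K.Walk u v) :
    (K.induce (p.support.toFinset : Set V)).Connected := by
  rw [List.coe_toFinset]
  exact p.connected_induce_support

theorem support_toFinset_ne_bot {u v : V} (p : K.Walk u v) : p.support.toFinset ≠ ⊥ :=
  Finset.ne_empty_of_mem (List.mem_toFinset.mpr p.start_mem_support)

theorem exists_isConnectedPartition_of_isPath (hk : 0 < k) {u v : V} (p : K.Walk u v)
    (hp : p.IsPath) (hkp : k ≤ p.support.length) :
    ∃ P : Finpartition p.support.toFinset, IsConnectedPartition K k P := by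
  induction hn : p.support.length using Nat.strong_induction_on generalizing u v with
  | _ n ih =>
    rcases lt_or_ge p.support.length (2 * k) with hlt | hge
    · refine ⟨_, isConnectedPartition_indiscrete (support_toFinset_ne_bot p)
        (induce_support_toFinset_connected p) ?_⟩
      rw [List.toFinset_card_of_nodup hp.support_nodup]
      exact ⟨hkp, hlt⟩
    · have hlen := p.length_support
      have happend := support_take_pred_append_support_drop p hk (by omega)
      have hdisj : Disjoint (p.drop k).support.toFinset (p.take (k - 1)).support.toFinset := by
        rw [List.disjoint_toFinset_iff_disjoint]
        exact (List.disjoint_of_nodup_append (happend ▸ hp.support_nodup)).symm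
      have hunion : (p.drop k).support.toFinset ⊔ (p.take (k - 1)).support.toFinset =
          p.support.toFinset := by
        rw [Finset.sup_eq_union, Finset.union_comm, ← List.toFinset_append, happend]
      have hfirst : (p.take (k - 1)).support.length = k := by
        rw [p.support_take, List.length_take, Nat.sub_add_cancel hk, min_eq_left hkp]
      have hrest : k + (p.drop k).support.length = n := by
        rw [← hn, ← happend, List.length_append, hfirst]
      obtain ⟨P, hP⟩ := ih _ (by omega) (p.drop k) (hp.drop k) (by omega) rfl
      refine ⟨_, hP.extend (support_toFinset_ne_bot _) hdisj hunion
        (induce_support_toFinset_connected _) ?_⟩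
      rw [List.toFinset_card_of_nodup (hp.take _).support_nodup, hfirst]
      exact ⟨le_rfl, by omega⟩

theorem exists_isConnectedPartition_univ [Fintype V]
    (h : ∀ c : K.ConnectedComponent, ∃ s : Finset V, (s : Set V) = c.supp ∧
      ∃ P : Finpartition s, IsConnectedPartition K k P) :
    ∃ P : Finpartition (Finset.univ : Finset V), IsConnectedPartition K k P := by
  classical
  let components : Finpartition (Finset.univ : Finset V) := .ofSetoid K.reachableSetoid
  have hpart : ∀ s ∈ components.parts, ∃ P : Finpartition s, IsConnectedPartition K k P := by
    intro s hs
    obtain ⟨v, hv⟩ := components.nonempty_of_mem_parts hs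
    obtain rfl := components.part_eq_of_mem hs hv
    obtain ⟨t, ht, hP⟩ := h (K.connectedComponentMk v)
    have hts : t = components.part v := by
      ext w
      rw [Finpartition.mem_part_ofSetoid_iff_rel, ← Finset.mem_coe, ht,
        ConnectedComponent.mem_supp_iff, ConnectedComponent.eq]
      exact K.reachable_comm
    exact hts ▸ hP
  choose Q hQ using hpart
  refine ⟨components.bind Q, fun t ht ↦ ?_⟩
  obtain ⟨s, hs, hts⟩ := Finpartition.mem_bind.mp ht
  exact hQ s hs t hts

theorem withinParts_adj {P : Finpartition s} {u v : V} :
    (withinParts K P).Adj u v ↔ K.Adj u v ∧ P.part u = P.part v := by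
  simp [withinParts]

theorem part_eq_of_reachable_withinParts {P : Finpartition s} {u v : V}
    (h : (withinParts K P).Reachable u v) : P.part u = P.part v := by
  obtain ⟨p⟩ := h
  induction p with
  | nil => rfl
  | cons hadj _ ih => exact (withinParts_adj.mp hadj).2.trans ih

theorem reachable_withinParts_of_mem {P : Finpartition s} {t : Finset V} (ht : t ∈ P.parts)
    (hconn : (K.induce (t : Set V)).Connected) {u v : V} (hu : u ∈ t) (hv : v ∈ t) :
    (withinParts K P).Reachable u v := by
  let inclusion : K.induce (t : Set V) →g withinParts K P :=
    { toFun := Subtype.val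
      map_rel' {a b} hab := withinParts_adj.mpr
        ⟨hab, (P.part_eq_of_mem ht a.2).trans (P.part_eq_of_mem ht b.2).symm⟩ }
  exact (hconn.preconnected ⟨u, hu⟩ ⟨v, hv⟩).map inclusion

theorem supp_connectedComponentMk_withinParts [Fintype V]
    {P : Finpartition (Finset.univ : Finset V)}
    (hP : ∀ t ∈ P.parts, (K.induce (t : Set V)).Connected) (v : V) :
    ((withinParts K P).connectedComponentMk v).supp = P.part v := by
  ext w
  rw [ConnectedComponent.mem_supp_iff, ConnectedComponent.eq, Finset.mem_coe]
  have hpart : P.part v ∈ P.parts := P.part_mem.mpr (Finset.mem_univ v)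
  have hv : v ∈ P.part v := P.mem_part (Finset.mem_univ v)
  constructor
  · intro h
    rw [← part_eq_of_reachable_withinParts h]
    exact P.mem_part (Finset.mem_univ w)
  · exact fun hw ↦ reachable_withinParts_of_mem hpart (hP _ hpart) hw hv

theorem IsConnectedPartition.card_supp_mem_Ico [Fintype V]
    {P : Finpartition (Finset.univ : Finset V)} (hP : IsConnectedPartition K k P)
    (C : (withinParts K P).ConnectedComponent) : Nat.card C.supp ∈ Set.Ico k (2 * k) := by
  induction C using ConnectedComponent.ind with | _ v =>
  rw [supp_connectedComponentMk_withinParts (fun t ht ↦ (hP t ht).1) v, Nat.card_coe_set_eq,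
    Set.ncard_coe_finset]
  exact (hP _ (P.part_mem.mpr (Finset.mem_univ v))).2

end Partition

theorem exists_isPath_support_eq_supp_of_isCycles {V : Type*} [Finite V] {K : SimpleGraph V}
    (hK : K.IsCycles) {c : K.ConnectedComponent} {v : V} (hv : v ∈ c.supp)
    (hne : (K.neighborSet v).Nonempty) :
    ∃ (u w : V) (p : K.Walk u w), p.IsPath ∧ 3 ≤ p.support.length ∧
      {x | x ∈ p.support} = c.supp := by
  obtain ⟨q, hq, hsupp⟩ := hK.exists_cycle_toSubgraph_verts_eq_connectedComponentSupp hv hne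
  refine ⟨_, _, q.tail, hq.isPath_tail, ?_, ?_⟩
  · rw [q.support_tail_of_not_nil hq.not_nil, List.length_tail, q.length_support]
    exact hq.three_le_length
  · rw [← hsupp, q.verts_toSubgraph, q.support_tail_of_not_nil hq.not_nil]
    ext x
    rw [Set.mem_ofPred_eq, Set.mem_ofPred_eq, q.mem_support_iff, iff_or_self]
    rintro rfl
    exact q.end_mem_tail_support hq.not_nil

theorem exists_le_forall_card_supp_mem_Ico_of_isPath {V : Type*} [Finite V] {K : SimpleGraph V}
    {k : ℕ} (hk : 0 < k)
    (hK : ∀ c : K.ConnectedComponent, ∃ (u w : V) (p : K.Walk u w),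
      p.IsPath ∧ k ≤ p.support.length ∧ {x | x ∈ p.support} = c.supp) :
    ∃ H ≤ K, ∀ C : H.ConnectedComponent, Nat.card C.supp ∈ Set.Ico k (2 * k) := by
  classical
  have := Fintype.ofFinite V
  obtain ⟨P, hP⟩ : ∃ P : Finpartition (Finset.univ : Finset V), IsConnectedPartition K k P := by
    refine exists_isConnectedPartition_univ fun c ↦ ?_
    obtain ⟨u, w, p, hp, hkp, hsupp⟩ := hK c
    exact ⟨p.support.toFinset, by rw [List.coe_toFinset, hsupp],
      exists_isConnectedPartition_of_isPath hk p hp hkp⟩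
  exact ⟨withinParts K P, sdiff_le, hP.card_supp_mem_Ico⟩

theorem exists_le_forall_card_supp_mem_Ico_of_ncard_neighborSet_eq_two {V : Type*} [Finite V]
    {K : SimpleGraph V} (hK : ∀ v, (K.neighborSet v).ncard = 2) :
    ∃ H ≤ K, ∀ C : H.ConnectedComponent, Nat.card C.supp ∈ Set.Ico 3 6 := by
  refine exists_le_forall_card_supp_mem_Ico_of_isPath three_pos fun c ↦ ?_
  obtain ⟨v, hv⟩ := c.nonempty_supp
  have hne : (K.neighborSet v).Nonempty :=
    Set.nonempty_of_ncard_ne_zero (by rw [hK v]; exact two_ne_zero)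
  exact exists_isPath_support_eq_supp_of_isCycles (fun v _ ↦ hK v) hv hne

theorem card_le_mul_card_connectedComponent {V : Type*} [Finite V] {H : SimpleGraph V} {m : ℕ}
    (hH : ∀ C : H.ConnectedComponent, Nat.card C.supp ≤ m) :
    Nat.card V ≤ m * Nat.card H.ConnectedComponent := by
  have := Fintype.ofFinite H.ConnectedComponent
  calc Nat.card V = (⋃ C : H.ConnectedComponent, C.supp).ncard := by
        rw [H.iUnion_connectedComponentSupp, Set.ncard_univ]
    _ ≤ ∑ C : H.ConnectedComponent, C.supp.ncard := Set.ncard_iUnion_le_of_fintype _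
    _ ≤ ∑ _C : H.ConnectedComponent, m := Finset.sum_le_sum fun C _ ↦ hH C
    _ = m * Nat.card H.ConnectedComponent := by
        rw [Finset.sum_const, Finset.card_univ, Nat.card_eq_fintype_card, smul_eq_mul, mul_comm]

theorem exists_subgraph_coe_iso {V : Type*} {G : SimpleGraph V} {F : G.Subgraph}
    (hF : F.IsSpanning) {H : SimpleGraph V} (hH : H ≤ F.spanningCoe) :
    ∃ H' ≤ F, H'.verts = F.verts ∧ Nonempty (H'.coe ≃g H) := by
  let H' : G.Subgraph := toSubgraph H (hH.trans F.spanningCoe_le)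
  have hspan : H'.IsSpanning := toSubgraph.isSpanning H _
  refine ⟨H', ⟨fun v _ ↦ hF v, fun _ _ h ↦ hH h⟩, ?_,
    ⟨(H'.spanningCoeEquivCoeOfSpanning hspan).symm⟩⟩
  rw [Subgraph.isSpanning_iff.mp hF]
  rfl

theorem ceil_sub_two_mul_ceil_div_five_div_three_le {n m : ℕ} (h : n ≤ 5 * m) :
    ⌈((n : ℚ) - 2 * (⌈(n : ℚ) / 5⌉ : ℚ)) / 3⌉ ≤ (m : ℤ) := by
  have hceil : (n : ℚ) / 5 ≤ (⌈(n : ℚ) / 5⌉ : ℚ) := Int.le_ceil _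
  have hnm : (n : ℚ) ≤ 5 * m := by exact_mod_cast h
  rw [Int.ceil_le, Int.cast_natCast]
  calc ((n : ℚ) - 2 * (⌈(n : ℚ) / 5⌉ : ℚ)) / 3 ≤ (n - 2 * (n / 5)) / 3 := by gcongr
    _ = n / 5 := by ring
    _ ≤ m := by linarith

/-- any 2-factor `F` of a finite simple graph `G` on `n` vertices has a
spanning subgraph `H` (obtained by deleting edges only) all of whose connected components
have at least 3 vertices, with at least `⌈(n - 2⌈n/5⌉)/3⌉` connected components. -/
theorem twoFactor_split_into_components {V : Type*} [Fintype V] (G : SimpleGraph V) (n : ℕ)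
    (hn : Fintype.card V = n) (F : G.Subgraph) (hF : IsTwoFactor F) :
    ∃ H : G.Subgraph, H ≤ F ∧ H.verts = F.verts ∧
      (∀ C : H.coe.ConnectedComponent, 3 ≤ Nat.card C.supp) ∧
      ⌈((n : ℚ) - 2 * (⌈(n : ℚ) / 5⌉ : ℚ)) / 3⌉ ≤ (Nat.card H.coe.ConnectedComponent : ℤ) := by
  obtain ⟨hspan, hdeg⟩ := hF
  obtain ⟨H, hHF, hsize⟩ :=
    exists_le_forall_card_supp_mem_Ico_of_ncard_neighborSet_eq_two (K := F.spanningCoe) hdeg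
  have hcount : n ≤ 5 * Nat.card H.ConnectedComponent := by
    rw [← hn, ← Nat.card_eq_fintype_card]
    exact card_le_mul_card_connectedComponent fun C ↦ Nat.le_of_lt_succ (hsize C).2
  obtain ⟨H', hle, hverts, ⟨e⟩⟩ := exists_subgraph_coe_iso hspan hHF
  refine ⟨H', hle, hverts, fun C ↦ ?_, ?_⟩
  · rw [Nat.card_congr (ConnectedComponent.isoEquivSupp e C)]
    exact (hsize _).1
  · rw [Nat.card_congr e.connectedComponentEquiv]
    exact ceil_sub_two_mul_ceil_div_five_div_three_le hcount
end

section
/- Let G be a finite connected simple graph with real edge weights c, let T be a spanning tree of G of minimum total weight, let 1 ≤ p ≤ |V(G)|, and let T' be the forest obtained from T by deleting p − 1 edges of T of largest weight. Then T' is a spanning forest of G with exactly p connected components, and its total weight is minimum among all spanning forests of G with exactly p connected components. -/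
open SimpleGraph

/-- The total weight of a subgraph: the sum of the weights of its edges. -/
noncomputable def subgraphWeight {V : Type*} {G : SimpleGraph V} (c : Sym2 V → ℝ)
    (F : G.Subgraph) : ℝ :=
  ∑ᶠ e ∈ F.edgeSet, c e

/-!
A forest with `p` components on `n` vertices has `n - p` edges. A competing forest `F` extends to a
spanning tree `S` using only edges of `T`, and `S \ F` then consists of exactly `p - 1` edges of
`T`, which weigh at most as much as the `p - 1` heaviest edges `D`. Hence
`c F = c S - c (S \ F) ≥ c T - c D`.
-/

section Sums

variable {α M : Type*} [AddCommMonoid M] {c : α → M}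

lemma sum_le_sum_of_card_eq_of_forall_le [Preorder M] [IsOrderedAddMonoid M] {s t : Finset α}
    (hcard : s.card = t.card) (hc : ∀ a ∈ s, ∀ b ∈ t, c a ≤ c b) :
    ∑ a ∈ s, c a ≤ ∑ b ∈ t, c b := by
  let σ : s ≃ t := Finset.equivOfCardEq hcard
  calc ∑ a ∈ s, c a = ∑ a : s, c a := (Finset.sum_coe_sort s c).symm
    _ ≤ ∑ a : s, c (σ a) := Finset.sum_le_sum fun a _ ↦ hc a a.2 (σ a) (σ a).2
    _ = ∑ b : t, c b := σ.sum_comp fun b : t ↦ c b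
    _ = ∑ b ∈ t, c b := Finset.sum_coe_sort t c

variable [PartialOrder M] [IsOrderedCancelAddMonoid M]

lemma sum_le_sum_of_card_eq_of_forall_sdiff_le [DecidableEq α] {s t : Finset α}
    (hcard : s.card = t.card) (hc : ∀ a ∈ s \ t, ∀ b ∈ t \ s, c a ≤ c b) :
    ∑ a ∈ s, c a ≤ ∑ b ∈ t, c b :=
  Finset.sum_sdiff_le_sum_sdiff.mp
    (sum_le_sum_of_card_eq_of_forall_le (Finset.card_sdiff_comm hcard) hc)

lemma finsum_mem_sdiff_le_finsum_mem_of_exchange {B D I S : Set α} (hB : B.Finite) (hS : S.Finite)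
    (hDB : D ⊆ B) (hIS : I ⊆ S) (hSIB : S \ I ⊆ B) (hcard : (S \ I).ncard = D.ncard)
    (hD : ∀ b ∈ D, ∀ a ∈ B \ D, c a ≤ c b) (hBS : ∑ᶠ b ∈ B, c b ≤ ∑ᶠ s ∈ S, c s) :
    ∑ᶠ b ∈ B \ D, c b ≤ ∑ᶠ i ∈ I, c i := by
  classical
  lift D to Finset α using hB.subset hDB
  lift I to Finset α using hS.subset hIS
  lift B to Finset α using hB
  lift S to Finset α using hS
  simp only [← Finset.coe_sdiff, Finset.mem_coe, finsum_mem_finset_eq_sum, Finset.coe_subset,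
    Set.ncard_coe_finset] at *
  have hSID : ∑ a ∈ S \ I, c a ≤ ∑ b ∈ D, c b :=
    sum_le_sum_of_card_eq_of_forall_sdiff_le hcard fun a ha b hb ↦
      hD b (Finset.sdiff_subset hb) a (Finset.sdiff_subset_sdiff hSIB le_rfl ha)
  refine le_of_add_le_add_right (a := ∑ b ∈ D, c b) ?_
  calc ∑ b ∈ B \ D, c b + ∑ b ∈ D, c b = ∑ b ∈ B, c b := Finset.sum_sdiff hDB
    _ ≤ ∑ s ∈ S, c s := hBS
    _ = ∑ i ∈ I, c i + ∑ s ∈ S \ I, c s := by rw [add_comm, Finset.sum_sdiff hIS]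
    _ ≤ ∑ i ∈ I, c i + ∑ b ∈ D, c b := by gcongr

end Sums

section Forests

variable {V : Type*}

lemma sum_connectedComponent {M : Type*} [AddCommMonoid M] [Fintype V] (H : SimpleGraph V)
    [Fintype H.ConnectedComponent] [∀ C : H.ConnectedComponent, Fintype C] (f : V → M) :
    ∑ C : H.ConnectedComponent, ∑ v : C, f v = ∑ v, f v := by
  classical
  convert Fintype.sum_fiberwise H.connectedComponentMk f <;> exact Iff.rfl

lemma degree_toSimpleGraph {H : SimpleGraph V} (C : H.ConnectedComponent) (v : C)
    [Fintype (C.toSimpleGraph.neighborSet v)] [Fintype (H.neighborSet v)] :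
    C.toSimpleGraph.degree v = H.degree v := by
  have hmap : (C.toSimpleGraph.neighborFinset v).map (.subtype (· ∈ C)) = H.neighborFinset v := by
    ext w
    simp only [Finset.mem_map, mem_neighborFinset]
    exact ⟨fun ⟨_, hvu, huw⟩ ↦ huw ▸ hvu,
      fun hvw ↦ ⟨⟨w, C.mem_supp_of_adj_mem_supp v.2 hvw⟩, hvw, rfl⟩⟩
  rw [← card_neighborFinset_eq_degree, ← card_neighborFinset_eq_degree, ← hmap, Finset.card_map]

lemma card_connectedComponent_eq_one_of_connected {H : SimpleGraph V} (hH : H.Connected) :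
    Nat.card H.ConnectedComponent = 1 :=
  Nat.card_eq_one_iff_unique.mpr
    ⟨hH.preconnected.subsingleton_connectedComponent, hH.nonempty.map H.connectedComponentMk⟩

lemma sum_degree_add_two_of_isAcyclic {H : SimpleGraph V} [H.LocallyFinite] (hH : H.IsAcyclic)
    (C : H.ConnectedComponent) [Fintype C] :
    ∑ v : C, H.degree v + 2 = 2 * Fintype.card C := by
  classical
  have hC : C.toSimpleGraph.IsTree := hH.isTree_connectedComponent C
  calc ∑ v : C, H.degree v + 2 = ∑ v : C, C.toSimpleGraph.degree v + 2 := by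
        simp only [degree_toSimpleGraph]
    _ = 2 * (C.toSimpleGraph.edgeFinset.card + 1) := by
        rw [sum_degrees_eq_twice_card_edges, mul_add_one]
    _ = 2 * Fintype.card C := by rw [hC.card_edgeFinset]

lemma ncard_edgeSet_add_card_connectedComponent_of_isAcyclic [Finite V] {H : SimpleGraph V}
    (hH : H.IsAcyclic) : H.edgeSet.ncard + Nat.card H.ConnectedComponent = Nat.card V := by
  classical
  have := Fintype.ofFinite V
  rw [← coe_edgeFinset, Set.ncard_coe_finset, Nat.card_eq_fintype_card, Nat.card_eq_fintype_card]
  refine Nat.eq_of_mul_eq_mul_left two_pos ?_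
  calc 2 * (H.edgeFinset.card + Fintype.card H.ConnectedComponent)
      = ∑ v, H.degree v + ∑ _C : H.ConnectedComponent, 2 := by
        rw [sum_degrees_eq_twice_card_edges, Finset.sum_const, Finset.card_univ, smul_eq_mul]
        ring
    _ = ∑ C : H.ConnectedComponent, (∑ v : C, H.degree v + 2) := by
        rw [Finset.sum_add_distrib, sum_connectedComponent H fun v ↦ H.degree v]
    _ = ∑ C : H.ConnectedComponent, 2 * ∑ _v : C, 1 := by
        simp only [sum_degree_add_two_of_isAcyclic hH, Fintype.card_eq_sum_ones]
    _ = 2 * Fintype.card V := by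
        rw [← Finset.mul_sum, sum_connectedComponent H fun _ ↦ 1, Fintype.card_eq_sum_ones]

lemma ncard_edgeSet_sdiff_add_one_eq_card_connectedComponent [Finite V] {H S : SimpleGraph V}
    (hS : S.IsTree) (hHS : H ≤ S) :
    (S.edgeSet \ H.edgeSet).ncard + 1 = Nat.card H.ConnectedComponent := by
  have hScard := ncard_edgeSet_add_card_connectedComponent_of_isAcyclic hS.isAcyclic
  have hHcard := ncard_edgeSet_add_card_connectedComponent_of_isAcyclic (hS.isAcyclic.anti hHS)
  have hsdiff := Set.ncard_sdiff_add_ncard_of_subset (edgeSet_mono hHS)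
  rw [card_connectedComponent_eq_one_of_connected hS.connected] at hScard
  lia

end Forests

section SpanningSubgraphs

variable {V : Type*} {G : SimpleGraph V}

lemma edgeSet_subgraph_deleteEdges (T : G.Subgraph) (D : Set (Sym2 V)) :
    (T.deleteEdges D).edgeSet = T.edgeSet \ D := by
  rw [← Subgraph.edgeSet_spanningCoe, ← Subgraph.deleteEdges_spanningCoe_eq, edgeSet_deleteEdges,
    Subgraph.edgeSet_spanningCoe]

lemma ncard_edgeSet_sdiff_add_one_eq_card_connectedComponent_coe [Finite V] {F S : G.Subgraph}
    (hF : F.IsSpanning) (hS : S.IsSpanning) (hStree : S.coe.IsTree) (hFS : F ≤ S) :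
    (S.edgeSet \ F.edgeSet).ncard + 1 = Nat.card F.coe.ConnectedComponent := by
  rw [← Nat.card_congr (F.spanningCoeEquivCoeOfSpanning hF).connectedComponentEquiv]
  exact ncard_edgeSet_sdiff_add_one_eq_card_connectedComponent
    ((S.spanningCoeEquivCoeOfSpanning hS).isTree_iff.mpr hStree) (Subgraph.spanningCoe_le_of_le hFS)

lemma exists_isSpanning_isTree_le_sup {F T : G.Subgraph} (hF : F.IsSpanning) (hT : T.IsSpanning)
    (hFacyclic : F.coe.IsAcyclic) (hTconn : T.coe.Connected) :
    ∃ S : G.Subgraph, S.IsSpanning ∧ S.coe.IsTree ∧ F ≤ S ∧ S ≤ F ⊔ T := by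
  have hsup : (F.spanningCoe ⊔ T.spanningCoe).Connected :=
    ((T.spanningCoeEquivCoeOfSpanning hT).connected_iff.mpr hTconn).mono le_sup_right
  obtain ⟨H, hFH, hHle, hH⟩ := hsup.exists_isTree_le_of_le_of_isAcyclic le_sup_left
    ((F.spanningCoeEquivCoeOfSpanning hF).isAcyclic_iff.mpr hFacyclic)
  have hHG : H ≤ G := hHle.trans (sup_le F.spanningCoe_le T.spanningCoe_le)
  have hspan := toSubgraph.isSpanning H hHG
  exact ⟨toSubgraph H hHG, hspan,
    ((toSubgraph H hHG).spanningCoeEquivCoeOfSpanning hspan).isTree_iff.mp hH,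
    ⟨fun _ _ ↦ hspan _, hFH⟩, ⟨fun v _ ↦ Or.inl (hF v), hHle⟩⟩

end SpanningSubgraphs

theorem mst_delete_heaviest_edges_general {V M : Type*} [Finite V] [AddCommMonoid M]
    [PartialOrder M] [IsOrderedCancelAddMonoid M] {G : SimpleGraph V} {c : Sym2 V → M}
    {T : G.Subgraph} (hTspan : T.IsSpanning) (hTtree : T.coe.IsTree)
    (hTmin : ∀ T₀ : G.Subgraph, T₀.IsSpanning → T₀.coe.IsTree →
      ∑ᶠ e ∈ T.edgeSet, c e ≤ ∑ᶠ e ∈ T₀.edgeSet, c e)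
    {D : Set (Sym2 V)} (hDsub : D ⊆ T.edgeSet) (hDmax : ∀ e ∈ D, ∀ f ∈ T.edgeSet \ D, c f ≤ c e) :
    (T.deleteEdges D).IsSpanning ∧ (T.deleteEdges D).coe.IsAcyclic ∧
      Nat.card (T.deleteEdges D).coe.ConnectedComponent = D.ncard + 1 ∧
      ∀ F : G.Subgraph, F.IsSpanning → F.coe.IsAcyclic →
        Nat.card F.coe.ConnectedComponent = D.ncard + 1 →
        ∑ᶠ e ∈ (T.deleteEdges D).edgeSet, c e ≤ ∑ᶠ e ∈ F.edgeSet, c e := by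
  refine ⟨hTspan, hTtree.isAcyclic.anti (Subgraph.coe_deleteEdges_le D), ?_,
    fun F hFspan hFacyclic hFcard ↦ ?_⟩
  · rw [← ncard_edgeSet_sdiff_add_one_eq_card_connectedComponent_coe (F := T.deleteEdges D)
      hTspan hTspan hTtree
      (Subgraph.deleteEdges_le D), edgeSet_subgraph_deleteEdges, Set.sdiff_sdiff_cancel_left hDsub]
  · obtain ⟨S, hSspan, hStree, hFS, hSFT⟩ :=
      exists_isSpanning_isTree_le_sup hFspan hTspan hFacyclic hTtree.connected
    have hSF : S.edgeSet \ F.edgeSet ⊆ T.edgeSet :=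
      Set.sdiff_subset_iff.mpr (Subgraph.edgeSet_sup ▸ Subgraph.edgeSet_mono hSFT)
    have hcard : (S.edgeSet \ F.edgeSet).ncard = D.ncard := Nat.add_right_cancel <|
      (ncard_edgeSet_sdiff_add_one_eq_card_connectedComponent_coe hFspan hSspan hStree hFS).trans
        hFcard
    rw [edgeSet_subgraph_deleteEdges]
    exact finsum_mem_sdiff_le_finsum_mem_of_exchange T.edgeSet.toFinite S.edgeSet.toFinite hDsub
      (Subgraph.edgeSet_mono hFS) hSF hcard hDmax (hTmin S hSspan hStree)

/-- if `T` is a minimum-weight spanning tree of a finite connected graph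
`G` and `T'` is obtained from `T` by deleting `p - 1` edges of largest weight
(`1 ≤ p ≤ |V(G)|`), then `T'` is a spanning forest of `G` with exactly `p` connected
components of minimum total weight among all such spanning forests. -/
theorem mst_delete_heaviest_edges {V : Type*} [Fintype V] (G : SimpleGraph V)
    (hG : G.Connected) (c : Sym2 V → ℝ) (T : G.Subgraph)
    (hTspan : T.IsSpanning) (hTtree : T.coe.IsTree)
    (hTmin : ∀ T₀ : G.Subgraph, T₀.IsSpanning → T₀.coe.IsTree →
      subgraphWeight c T ≤ subgraphWeight c T₀)
    (p : ℕ) (hp1 : 1 ≤ p) (hpn : p ≤ Fintype.card V)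
    (D : Set (Sym2 V)) (hDsub : D ⊆ T.edgeSet) (hDcard : D.ncard = p - 1)
    (hDmax : ∀ e ∈ D, ∀ f ∈ T.edgeSet \ D, c f ≤ c e) :
    (T.deleteEdges D).IsSpanning ∧ (T.deleteEdges D).coe.IsAcyclic ∧
      Nat.card (T.deleteEdges D).coe.ConnectedComponent = p ∧
      ∀ T' : G.Subgraph, T'.IsSpanning → T'.coe.IsAcyclic →
        Nat.card T'.coe.ConnectedComponent = p →
        subgraphWeight c (T.deleteEdges D) ≤ subgraphWeight c T' := by
  obtain rfl : p = D.ncard + 1 := by lia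
  exact mst_delete_heaviest_edges_general hTspan hTtree hTmin hDsub hDmax
end

section
/- Let K_V be the complete graph on a finite vertex set V with nonnegative edge weights c satisfying the triangle inequality, let S ⊆ V with |S| ≥ 3, and let W be a closed walk in K_V that uses only vertices of S and visits every vertex of S at least once. Then there exists a cycle in K_V whose vertex set is exactly S and whose total weight is at most the total weight of W, where edges of W are counted with multiplicity. -/
open SimpleGraph

/-!
Listing the vertices of the closed walk after its start and keeping only the last occurrence of
each one yields a list without repetition that still ends at the base point, hence a cycle whose
vertex sequence is a sublist of that of the walk. Deleting a vertex from a sequence does not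
increase its cost, by the triangle inequality. Deletions may make equal vertices adjacent on the
way, as in `u, v, u ↦ u, u`, so costs are computed with the weight replaced by `0` on loops.
-/

section ChainCost

variable {V M : Type*} [AddMonoid M]

/-- The cost `d x₀ x₁ + d x₁ x₂ + ⋯` of a vertex sequence `[x₀, x₁, x₂, …]`, so that the weight of
a walk depends only on its support. -/
def chainCost (d : V → V → M) (l : List V) : M :=
  (List.zipWith d l l.tail).sum

@[simp]
lemma chainCost_singleton (d : V → V → M) (a : V) : chainCost d [a] = 0 := rfl

@[simp]
lemma chainCost_cons_cons (d : V → V → M) (a b : V) (l : List V) :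
    chainCost d (a :: b :: l) = d a b + chainCost d (b :: l) := by
  simp [chainCost]

variable [Preorder M] [AddRightMono M] {d : V → V → M}

lemma chainCost_cons_le_cons_cons (hd : ∀ a b, 0 ≤ d a b)
    (htri : ∀ a b e, d a e ≤ d a b + d b e) (a b : V) (l : List V) :
    chainCost d (a :: l) ≤ chainCost d (a :: b :: l) := by
  cases l with
  | nil => simpa using hd a b
  | cons e l => simpa [← add_assoc] using add_le_add_left (htri a b e) (chainCost d (e :: l))

lemma chainCost_cons_le_of_sublist [AddLeftMono M] (hd : ∀ a b, 0 ≤ d a b)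
    (htri : ∀ a b e, d a e ≤ d a b + d b e) {l₁ l₂ : List V} (h : l₁.Sublist l₂) (a : V) :
    chainCost d (a :: l₁) ≤ chainCost d (a :: l₂) := by
  induction h generalizing a with
  | slnil => rfl
  | cons b _ ih => exact (ih a).trans (chainCost_cons_le_cons_cons hd htri a b _)
  | cons_cons b _ ih => simpa using add_le_add_right (ih b) (d a b)

end ChainCost

section WalkWeight

variable {V M : Type*} [AddMonoid M]

lemma sum_map_edges_eq_chainCost {G : SimpleGraph V} (c : Sym2 V → M) {u v : V}
    (p : G.Walk u v) :
    (p.edges.map c).sum = chainCost (fun a b ↦ c s(a, b)) p.support := by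
  rw [Walk.edges_eq_zipWith_support, List.map_zipWith, chainCost]

lemma sum_map_edges_indicator_edgeSet {G : SimpleGraph V} (c : Sym2 V → M) {u v : V}
    (p : G.Walk u v) :
    (p.edges.map (G.edgeSet.indicator c)).sum = (p.edges.map c).sum := by
  congr 1
  exact List.map_congr_left fun e he ↦ Set.indicator_of_mem (p.edges_subset_edgeSet he) c

variable [Preorder M] [AddLeftMono M] {c : Sym2 V → M}

lemma indicator_edgeSet_top_triangle (hc : ∀ e, 0 ≤ c e)
    (htri : ∀ u v x : V, u ≠ v → v ≠ x → u ≠ x → c s(u, x) ≤ c s(u, v) + c s(v, x))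
    (u v x : V) :
    (⊤ : SimpleGraph V).edgeSet.indicator c s(u, x) ≤
      (⊤ : SimpleGraph V).edgeSet.indicator c s(u, v) +
        (⊤ : SimpleGraph V).edgeSet.indicator c s(v, x) := by
  rcases eq_or_ne u v with rfl | huv
  · simp
  rcases eq_or_ne v x with rfl | hvx
  · simp
  rcases eq_or_ne u x with rfl | hux
  · simpa [huv, hvx] using add_nonneg (hc s(u, v)) (hc s(v, u))
  · simpa [huv, hvx, hux] using htri u v x huv hvx hux

lemma sum_map_edges_le_of_support_sublist [AddRightMono M] (hc : ∀ e, 0 ≤ c e)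
    (htri : ∀ u v x : V, u ≠ v → v ≠ x → u ≠ x → c s(u, x) ≤ c s(u, v) + c s(v, x))
    {u v x : V} {p : (⊤ : SimpleGraph V).Walk u v} {q : (⊤ : SimpleGraph V).Walk u x}
    (h : p.support.Sublist q.support) :
    (p.edges.map c).sum ≤ (q.edges.map c).sum := by
  rw [← p.cons_tail_support, ← q.cons_tail_support, List.cons_sublist_cons] at h
  rw [← sum_map_edges_indicator_edgeSet c p, ← sum_map_edges_indicator_edgeSet c q,
    sum_map_edges_eq_chainCost, sum_map_edges_eq_chainCost, ← p.cons_tail_support,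
    ← q.cons_tail_support]
  exact chainCost_cons_le_of_sublist
    (fun _ _ ↦ Set.indicator_nonneg (fun e _ ↦ hc e) _)
    (indicator_edgeSet_top_triangle hc htri) h u

end WalkWeight

section Shortcut

variable {V : Type*}

lemma getLast?_dedup [DecidableEq V] (l : List V) : l.dedup.getLast? = l.getLast? := by
  induction l with
  | nil => rfl
  | cons a l ih =>
    by_cases ha : a ∈ l
    · rw [List.dedup_cons_of_mem ha, ih, List.getLast?_cons_of_ne_nil (List.ne_nil_of_mem ha)]
    · rw [List.dedup_cons_of_notMem ha, List.getLast?_cons, List.getLast?_cons, ih]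

lemma isCycle_of_nodup_tail_support {G : SimpleGraph V} {u : V} {p : G.Walk u u}
    (hlen : 3 ≤ p.length) (hnodup : p.support.tail.Nodup) : p.IsCycle := by
  cases p with
  | nil => simp at hlen
  | cons h q =>
    have hq : q.IsPath := .mk' hnodup
    refine (Walk.cons_isCycle_iff q h).2 ⟨hq, fun hmem ↦ ?_⟩
    have : q.length = 1 := hq.length_eq_one_of_mem_edges (Sym2.eq_swap ▸ hmem)
    rw [Walk.length_cons] at hlen
    lia

lemma isChain_ne_cons_of_getLast? {v : V} {l : List V} (hnodup : l.Nodup) (hlen : 2 ≤ l.length)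
    (hlast : l.getLast? = some v) : (v :: l).IsChain (· ≠ ·) := by
  obtain _ | ⟨a, _ | ⟨b, l⟩⟩ := l
  · simp at hlen
  · simp at hlen
  · rw [List.getLast?_cons_cons] at hlast
    have hva : v ≠ a := by
      rintro rfl
      exact hnodup.notMem (List.mem_of_getLast? hlast)
    exact .cons_cons hva hnodup.isChain

lemma exists_walk_support_eq_cons {G : SimpleGraph V} {u v : V} {l : List V}
    (hchain : (u :: l).IsChain G.Adj) (hlast : (u :: l).getLast? = some v) :
    ∃ p : G.Walk u v, p.support = u :: l := by
  obtain rfl := (List.getLast_eq_iff_getLast?_eq_some (l.cons_ne_nil u)).2 hlast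
  exact ⟨Walk.ofSupport (u :: l) _ hchain, Walk.support_ofSupport _ hchain⟩

lemma exists_isCycle_top_support_eq_cons {v : V} {l : List V} (hnodup : l.Nodup)
    (hlen : 3 ≤ l.length) (hlast : l.getLast? = some v) :
    ∃ C : (⊤ : SimpleGraph V).Walk v v, C.IsCycle ∧ C.support = v :: l := by
  have hchain : (v :: l).IsChain (⊤ : SimpleGraph V).Adj :=
    isChain_ne_cons_of_getLast? hnodup (by lia) hlast
  have hlast' : (v :: l).getLast? = some v := by
    rw [List.getLast?_cons, hlast, Option.getD_some]
  obtain ⟨C, hsupp⟩ := exists_walk_support_eq_cons hchain hlast'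
  have hlength : C.length = l.length := by
    simpa [hsupp] using C.length_support.symm
  exact ⟨C, isCycle_of_nodup_tail_support (hlength ▸ hlen) (by rwa [hsupp]), hsupp⟩

lemma getLast?_tail_support {G : SimpleGraph V} {u v : V} {p : G.Walk u v} (hp : ¬ p.Nil) :
    p.support.tail.getLast? = some v := by
  rw [← List.getLast?_cons_of_ne_nil (List.ne_nil_of_mem (Walk.end_mem_tail_support hp)),
    p.cons_tail_support, List.getLast?_eq_some_getLast p.support_ne_nil, p.getLast_support]

lemma mem_tail_support_iff {G : SimpleGraph V} {v : V} {w : G.Walk v v} (hw : ¬ w.Nil) {x : V} :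
    x ∈ w.support.tail ↔ x ∈ w.support := by
  refine ⟨List.mem_of_mem_tail, fun hx ↦ ?_⟩
  rcases w.mem_support_iff.1 hx with rfl | hx
  · exact Walk.end_mem_tail_support hw
  · exact hx

lemma exists_isCycle_top_support_sublist {v : V} (w : (⊤ : SimpleGraph V).Walk v v)
    (hw : 3 ≤ {x | x ∈ w.support}.ncard) :
    ∃ C : (⊤ : SimpleGraph V).Walk v v, C.IsCycle ∧
      {x | x ∈ C.support} = {x | x ∈ w.support} ∧ C.support.Sublist w.support := by
  classical
  have hnil : ¬ w.Nil := by
    intro h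
    simp [Walk.nil_iff_support_eq.1 h] at hw
  have hmem {x : V} : x ∈ w.support.tail.dedup ↔ x ∈ w.support := by
    rw [List.mem_dedup, mem_tail_support_iff hnil]
  have hlen : 3 ≤ w.support.tail.dedup.length := by
    rw [← List.toFinset_card_of_nodup (List.nodup_dedup _), ← Set.ncard_coe_finset,
      List.coe_toFinset]
    simpa only [hmem] using hw
  have hlast : w.support.tail.dedup.getLast? = some v := by
    rw [getLast?_dedup, getLast?_tail_support hnil]
  obtain ⟨C, hC, hsupp⟩ := exists_isCycle_top_support_eq_cons (List.nodup_dedup _) hlen hlast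
  refine ⟨C, hC, ?_, ?_⟩
  · ext x
    simpa [hsupp, hmem] using fun h : x = v ↦ h ▸ w.start_mem_support
  · rw [hsupp, ← w.cons_tail_support]
    exact (List.dedup_sublist _).cons_cons v

end Shortcut

theorem shortcut_closed_walk_general {V M : Type*} [AddMonoid M] [Preorder M]
    [AddLeftMono M] [AddRightMono M] (c : Sym2 V → M) (hc : ∀ e, 0 ≤ c e)
    (htri : ∀ u v x : V, u ≠ v → v ≠ x → u ≠ x → c s(u, x) ≤ c s(u, v) + c s(v, x))
    (S : Set V) (hS : 3 ≤ S.ncard) (v : V) (w : (⊤ : SimpleGraph V).Walk v v)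
    (hw : {x | x ∈ w.support} = S) :
    ∃ C : (⊤ : SimpleGraph V).Walk v v, C.IsCycle ∧
      {x | x ∈ C.support} = S ∧ (C.edges.map c).sum ≤ (w.edges.map c).sum := by
  subst hw
  obtain ⟨C, hC, hsupp, hsub⟩ := exists_isCycle_top_support_sublist w hS
  exact ⟨C, hC, hsupp, sum_map_edges_le_of_support_sublist hc htri hsub⟩

/-- in a complete graph with nonnegative weights satisfying the triangle
inequality, if a closed walk `w` uses only vertices of `S` (`|S| ≥ 3`) and visits every
vertex of `S`, then there is a cycle with vertex set exactly `S` whose weight is at most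
the weight of `w` (edges counted with multiplicity). -/
theorem shortcut_closed_walk {V : Type*} [Fintype V] (c : Sym2 V → ℝ)
    (hc : ∀ e, 0 ≤ c e)
    (htri : ∀ u v x : V, u ≠ v → v ≠ x → u ≠ x → c s(u, x) ≤ c s(u, v) + c s(v, x))
    (S : Set V) (hS : 3 ≤ S.ncard) (v : V) (w : (⊤ : SimpleGraph V).Walk v v)
    (hw : {x | x ∈ w.support} = S) :
    ∃ (u : V) (C : (⊤ : SimpleGraph V).Walk u u), C.IsCycle ∧
      {x | x ∈ C.support} = S ∧ (C.edges.map c).sum ≤ (w.edges.map c).sum :=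
  ⟨v, shortcut_closed_walk_general c hc htri S hS v w hw⟩
end

section
/- Let K_V be the complete graph on a finite vertex set V with nonnegative edge weights c satisfying the triangle inequality. Let F be a 2-factor of K_V with q cycles and let T be a spanning forest of K_V with exactly p connected components, where 1 ≤ p ≤ q. Then there exists a Hamiltonian p-median solution of K_V with total weight at most c(F) + 2·c(T). -/
open SimpleGraph

/-- A Hamiltonian `p`-median solution of `G`: a spanning subgraph with all degrees 2
and exactly `p` connected components (i.e. `p` vertex-disjoint cycles, each with at
least 3 vertices, whose vertex sets partition `V`). -/
def IsHpMedianSolution {V : Type*} {G : SimpleGraph V} (p : ℕ) (H : G.Subgraph) : Prop :=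
  IsTwoFactor H ∧ Nat.card H.coe.ConnectedComponent = p

/-!
While the 2-factor has more than `p` cycles, `T` has an edge `uv` joining two of them. Replacing
cycle edges `uu'` and `vv'` by `uv` and `u'v'` merges these two cycles into one: a cycle stays
connected when one of its edges is removed. This costs at most `2 c(uv)`, because
`c(u'v') ≤ c(u'u) + c(uv) + c(vv')`. The edge `uv` is then removed from `T`, so every edge of `T` is
paid for at most once, and the union of the current 2-factor with what is left of `T` never gains a
component.
-/

/-- A 2-regular graph, with degrees measured by `Set.ncard` so that `IsTwoFactor F` says that `F` is
spanning and `F.spanningCoe` is 2-regular. -/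
def IsTwoRegular {V : Type*} (G : SimpleGraph V) : Prop :=
  ∀ v, (G.neighborSet v).ncard = 2

/-- The total edge weight of a graph, so that `subgraphWeight c F` is `graphWeight c F.spanningCoe`
by definition. -/
noncomputable def graphWeight {V : Type*} (c : Sym2 V → ℝ) (G : SimpleGraph V) : ℝ :=
  ∑ᶠ e ∈ G.edgeSet, c e

/-- The 2-switch that replaces the edges `ab` and `xy` of `G` by `ax` and `by`. -/
def edgeSwitch {V : Type*} (G : SimpleGraph V) (a b x y : V) : SimpleGraph V :=
  G.deleteEdges {s(a, b), s(x, y)} ⊔ edge a x ⊔ edge b y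

section Components

variable {V : Type*} {G H T : SimpleGraph V} {u v : V}

lemma reachable_le_of_adj_le (h : G.Adj ≤ H.Reachable) : G.Reachable ≤ H.Reachable := by
  rintro a b ⟨w⟩
  induction w with
  | nil => exact .rfl
  | cons hadj _ ih => exact (h _ _ hadj).trans ih

lemma card_connectedComponent_le_of_reachable_le [Finite G.ConnectedComponent]
    (h : G.Reachable ≤ H.Reachable) :
    Nat.card H.ConnectedComponent ≤ Nat.card G.ConnectedComponent := by
  refine Nat.card_le_card_of_surjective
    (ConnectedComponent.lift H.connectedComponentMk fun a b w _ =>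
      ConnectedComponent.sound (h a b w.reachable)) fun C => ?_
  induction C using ConnectedComponent.ind with | _ a
  exact ⟨G.connectedComponentMk a, rfl⟩

lemma exists_adj_not_reachable_of_card_sup_lt [Finite (G ⊔ T).ConnectedComponent]
    (h : Nat.card (G ⊔ T).ConnectedComponent < Nat.card G.ConnectedComponent) :
    ∃ u v, T.Adj u v ∧ ¬ G.Reachable u v := by
  contrapose! h
  exact card_connectedComponent_le_of_reachable_le <| reachable_le_of_adj_le fun a b hab =>
    hab.elim Adj.reachable (h a b)

lemma reachable_sup_edge_iff {a b : V} :
    (G ⊔ edge u v).Reachable a b ↔ G.Reachable a b ∨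
      (G.Reachable a u ∧ G.Reachable v b) ∨ (G.Reachable a v ∧ G.Reachable u b) := by
  have hle : G.Reachable ≤ (G ⊔ edge u v).Reachable := Reachable.mono' le_sup_left
  have huv : (G ⊔ edge u v).Reachable u v := by
    by_cases h : u = v
    · rw [h]
    · exact Adj.reachable (.inr (by simp [edge_adj, h]))
  constructor
  · rintro ⟨w⟩
    induction w with
    | nil => exact .inl .rfl
    | @cons a x b hadj _ ih =>
      rcases hadj with hadj | hadj
      · have hax := hadj.reachable
        rcases ih with h | ⟨hxu, hvb⟩ | ⟨hxv, hub⟩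
        exacts [.inl (hax.trans h), .inr (.inl ⟨hax.trans hxu, hvb⟩),
          .inr (.inr ⟨hax.trans hxv, hub⟩)]
      · rcases (edge_adj ..).1 hadj with ⟨⟨rfl, rfl⟩ | ⟨rfl, rfl⟩, -⟩
        · rcases ih with h | ⟨-, h⟩ | ⟨-, h⟩
          exacts [.inr (.inl ⟨.rfl, h⟩), .inr (.inl ⟨.rfl, h⟩), .inl h]
        · rcases ih with h | ⟨-, h⟩ | ⟨-, h⟩
          exacts [.inr (.inr ⟨.rfl, h⟩), .inl h, .inr (.inr ⟨.rfl, h⟩)]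
  · rintro (h | ⟨hau, hvb⟩ | ⟨hav, hub⟩)
    · exact hle _ _ h
    · exact (hle _ _ hau).trans (huv.trans (hle _ _ hvb))
    · exact (hle _ _ hav).trans (huv.symm.trans (hle _ _ hub))

lemma card_connectedComponent_sup_edge [Finite G.ConnectedComponent] (huv : ¬ G.Reachable u v) :
    Nat.card (G ⊔ edge u v).ConnectedComponent + 1 = Nat.card G.ConnectedComponent := by
  let f : G.ConnectedComponent → (G ⊔ edge u v).ConnectedComponent :=
    ConnectedComponent.map (Hom.ofLE le_sup_left)
  have hinj : Set.InjOn f {G.connectedComponentMk v}ᶜ := by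
    intro C hC D hD hCD
    induction C, D using ConnectedComponent.ind₂ with | _ a b
    have hav : ¬ G.Reachable a v := mt ConnectedComponent.sound hC
    have hvb : ¬ G.Reachable v b := fun h => hD (ConnectedComponent.sound h.symm)
    have hab := reachable_sup_edge_iff.1 (ConnectedComponent.exact hCD)
    exact ConnectedComponent.sound (by tauto)
  have himage : f '' {G.connectedComponentMk v}ᶜ = Set.univ := by
    refine Set.eq_univ_of_forall fun D => ?_
    induction D using ConnectedComponent.ind with | _ a
    by_cases hav : G.Reachable a v
    · exact ⟨G.connectedComponentMk u, mt ConnectedComponent.exact huv,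
        ConnectedComponent.sound (reachable_sup_edge_iff.2 (.inr (.inl ⟨.rfl, hav.symm⟩)))⟩
    · exact ⟨G.connectedComponentMk a, mt ConnectedComponent.exact hav, rfl⟩
  rw [← Set.ncard_univ (G ⊔ edge u v).ConnectedComponent, ← himage, hinj.ncard_image,
    ← Set.ncard_singleton (G.connectedComponentMk v), add_comm, Set.ncard_add_ncard_compl]

lemma reachable_sup_le_sup_deleteEdges (hH : (G ⊔ edge u v).Reachable ≤ H.Reachable) :
    (G ⊔ T).Reachable ≤ (H ⊔ T.deleteEdges {s(u, v)}).Reachable := by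
  have hle : (G ⊔ edge u v).Reachable ≤ (H ⊔ T.deleteEdges {s(u, v)}).Reachable :=
    hH.trans (Reachable.mono' le_sup_left)
  apply reachable_le_of_adj_le
  rintro a b (hab | hab)
  · exact hle _ _ (Adj.reachable (.inl hab))
  · by_cases h : s(a, b) = s(u, v)
    · exact hle _ _ (Adj.reachable (.inr ((adj_edge ..).2 ⟨h.symm, hab.ne⟩)))
    · exact Adj.reachable (.inr (deleteEdges_adj.2 ⟨hab, h⟩))

end Components

section GraphWeight

variable {V : Type*} {G : SimpleGraph V} {c : Sym2 V → ℝ}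

lemma graphWeight_nonneg (hc : ∀ e, 0 ≤ c e) : 0 ≤ graphWeight c G :=
  finsum_nonneg fun e => finsum_nonneg fun _ => hc e

lemma graphWeight_deleteEdges_singleton [Finite G.edgeSet] {e : Sym2 V} (he : e ∈ G.edgeSet) :
    graphWeight c (G.deleteEdges {e}) + c e = graphWeight c G := by
  rw [graphWeight, graphWeight, edgeSet_deleteEdges, add_comm, ← finsum_mem_singleton (f := c),
    finsum_mem_add_sdiff (Set.singleton_subset_iff.2 he) (Set.toFinite _)]

lemma graphWeight_sup_edge [Finite G.edgeSet] {u v : V} (hne : u ≠ v) (hadj : ¬ G.Adj u v) :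
    graphWeight c (G ⊔ edge u v) = graphWeight c G + c s(u, v) := by
  rw [graphWeight, graphWeight, edgeSet_sup, edgeSet_edge_of_ne hne,
    finsum_mem_union (Set.disjoint_singleton_right.2 (mt G.mem_edgeSet.1 hadj)) (Set.toFinite _)
      (Set.toFinite _), finsum_mem_singleton]

end GraphWeight

section EdgeSwitch

variable {V : Type*} {G : SimpleGraph V} {a b x y : V}

lemma edgeSwitch_comm : edgeSwitch G a b x y = edgeSwitch G x y a b := by
  rw [edgeSwitch, edgeSwitch, Set.pair_comm, edge_comm a, edge_comm b]

lemma edgeSwitch_flip : edgeSwitch G a b x y = edgeSwitch G b a y x := by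
  rw [edgeSwitch, edgeSwitch, Sym2.eq_swap (a := a), Sym2.eq_swap (a := x), sup_right_comm]

lemma edgeSwitch_adj {v w : V} :
    (edgeSwitch G a b x y).Adj v w ↔ (G.Adj v w ∧ s(v, w) ≠ s(a, b) ∧ s(v, w) ≠ s(x, y)) ∨
      (edge a x).Adj v w ∨ (edge b y).Adj v w := by
  simp only [edgeSwitch, sup_adj, deleteEdges_adj, Set.mem_insert_iff, Set.mem_singleton_iff,
    not_or, or_assoc]

lemma ncard_neighborSet_edgeSwitch_left (hab : G.Adj a b) (hax : ¬ G.Adj a x) (hne : a ≠ x)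
    (hxy : G.Adj x y) : ((edgeSwitch G a b x y).neighborSet a).ncard = (G.neighborSet a).ncard := by
  have : (edgeSwitch G a b x y).neighborSet a = insert x (G.neighborSet a \ {b}) := by
    ext w
    simp only [mem_neighborSet, edgeSwitch_adj, edge_adj, Set.mem_insert_iff, Set.mem_sdiff,
      Set.mem_singleton_iff, Ne, Sym2.eq_iff]
    grind [G.adj_comm, G.ne_of_adj]
  exact this ▸ Set.ncard_exchange hax hab

lemma ncard_neighborSet_edgeSwitch (hab : G.Adj a b) (hxy : G.Adj x y) (hax : ¬ G.Adj a x)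
    (hby : ¬ G.Adj b y) (hax_ne : a ≠ x) (hby_ne : b ≠ y) (v : V) :
    ((edgeSwitch G a b x y).neighborSet v).ncard = (G.neighborSet v).ncard := by
  by_cases hva : v = a
  · rw [hva, ncard_neighborSet_edgeSwitch_left hab hax hax_ne hxy]
  by_cases hvb : v = b
  · rw [hvb, edgeSwitch_flip, ncard_neighborSet_edgeSwitch_left hab.symm hby hby_ne hxy.symm]
  by_cases hvx : v = x
  · rw [hvx, edgeSwitch_comm,
      ncard_neighborSet_edgeSwitch_left hxy (mt Adj.symm hax) hax_ne.symm hab]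
  by_cases hvy : v = y
  · rw [hvy, edgeSwitch_comm, edgeSwitch_flip,
      ncard_neighborSet_edgeSwitch_left hxy.symm (mt Adj.symm hby) hby_ne.symm hab.symm]
  congr 1
  ext w
  simp only [mem_neighborSet, edgeSwitch_adj, edge_adj, Ne, Sym2.eq_iff]
  grind

lemma reachable_deleteEdges_pair (hbridge : ¬ G.IsBridge s(a, b)) (hax : ¬ G.Reachable a x) :
    (G.deleteEdges {s(a, b), s(x, y)}).Reachable a b := by
  obtain ⟨w, hw⟩ := reachable_deleteEdges_iff_exists_walk.1 (not_not.1 hbridge)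
  have hxy : s(x, y) ∉ w.edges := by
    classical
    exact fun h => hax (w.takeUntil x (w.fst_mem_support_of_mem_edges h)).reachable
  exact (w.toDeleteEdges _ (by rintro e he (rfl | rfl); exacts [hw he, hxy he])).reachable

lemma reachable_edgeSwitch (hab : ¬ G.IsBridge s(a, b)) (hxy : ¬ G.IsBridge s(x, y))
    (hax : ¬ G.Reachable a x) :
    (edgeSwitch G a b x y).Reachable = (G ⊔ edge a x).Reachable := by
  apply le_antisymm <;> apply reachable_le_of_adj_le
  · have hab' : G.Reachable a b := not_imp_comm.1 IsBridge.of_not_reachable hab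
    have hxy' : G.Reachable x y := not_imp_comm.1 IsBridge.of_not_reachable hxy
    intro v w hvw
    rw [reachable_sup_edge_iff]
    rcases edgeSwitch_adj.1 hvw with h | h | h
    · exact .inl h.1.reachable
    · rcases (edge_adj ..).1 h with ⟨⟨rfl, rfl⟩ | ⟨rfl, rfl⟩, -⟩
      · exact .inr (.inl ⟨.rfl, .rfl⟩)
      · exact .inr (.inr ⟨.rfl, .rfl⟩)
    · rcases (edge_adj ..).1 h with ⟨⟨rfl, rfl⟩ | ⟨rfl, rfl⟩, -⟩
      · exact .inr (.inl ⟨hab'.symm, hxy'⟩)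
      · exact .inr (.inr ⟨hxy'.symm, hab'⟩)
  · have hle : G.deleteEdges {s(a, b), s(x, y)} ≤ edgeSwitch G a b x y :=
      le_sup_left.trans le_sup_left
    have hab' : (edgeSwitch G a b x y).Reachable a b :=
      (reachable_deleteEdges_pair hab hax).mono hle
    have hxy' : (edgeSwitch G a b x y).Reachable x y :=
      (Set.pair_comm s(x, y) s(a, b) ▸
        reachable_deleteEdges_pair hxy (mt Reachable.symm hax)).mono hle
    rintro v w (hvw | hvw)
    · by_cases h₁ : s(v, w) = s(a, b)
      · rcases Sym2.eq_iff.1 h₁ with ⟨rfl, rfl⟩ | ⟨rfl, rfl⟩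
        exacts [hab', hab'.symm]
      by_cases h₂ : s(v, w) = s(x, y)
      · rcases Sym2.eq_iff.1 h₂ with ⟨rfl, rfl⟩ | ⟨rfl, rfl⟩
        exacts [hxy', hxy'.symm]
      exact (edgeSwitch_adj.2 (.inl ⟨hvw, h₁, h₂⟩)).reachable
    · exact (edgeSwitch_adj.2 (.inr (.inl hvw))).reachable

lemma graphWeight_edgeSwitch [Finite V] {c : Sym2 V → ℝ} (hab : G.Adj a b) (hxy : G.Adj x y)
    (hax : ¬ G.Adj a x) (hby : ¬ G.Adj b y) (hax_ne : a ≠ x) (hby_ne : b ≠ y) :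
    graphWeight c (edgeSwitch G a b x y) + (c s(a, b) + c s(x, y)) =
      graphWeight c G + (c s(a, x) + c s(b, y)) := by
  have hxy' : s(x, y) ∈ (G.deleteEdges {s(a, b)}).edgeSet := by
    simp only [mem_edgeSet, deleteEdges_adj, Set.mem_singleton_iff, Sym2.eq_iff]
    grind [G.adj_comm]
  have hG : graphWeight c (G.deleteEdges {s(a, b), s(x, y)}) + c s(x, y) + c s(a, b) =
      graphWeight c G := by
    rw [Set.insert_eq, ← deleteEdges_deleteEdges, graphWeight_deleteEdges_singleton hxy',
      graphWeight_deleteEdges_singleton hab]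
  have hby' : ¬ (G.deleteEdges {s(a, b), s(x, y)} ⊔ edge a x).Adj b y := by
    simp only [sup_adj, deleteEdges_adj, edge_adj]
    grind [G.ne_of_adj]
  rw [edgeSwitch, graphWeight_sup_edge hby_ne hby', graphWeight_sup_edge hax_ne (mt And.left hax)]
  linarith

end EdgeSwitch

section Merging

variable {V : Type*} [Finite V] {c : Sym2 V → ℝ} {G : SimpleGraph V}

lemma IsTwoRegular.not_isBridge (hG : IsTwoRegular G) {u v : V} (huv : G.Adj u v) :
    ¬ G.IsBridge s(u, v) :=
  not_not.2 (IsCycles.reachable_deleteEdges huv fun w _ => hG w)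

lemma exists_isTwoRegular_reachable_eq_sup_edge
    (htri : ∀ u v x : V, u ≠ v → v ≠ x → u ≠ x → c s(u, x) ≤ c s(u, v) + c s(v, x))
    (hG : IsTwoRegular G) {u v : V} (huv : ¬ G.Reachable u v) :
    ∃ H : SimpleGraph V, IsTwoRegular H ∧ H.Reachable = (G ⊔ edge u v).Reachable ∧
      graphWeight c H ≤ graphWeight c G + 2 * c s(u, v) := by
  have exists_adj (w : V) : ∃ w', G.Adj w w' :=
    Set.nonempty_of_ncard_ne_zero ((hG w).trans_ne two_ne_zero)
  obtain ⟨u', hu⟩ := exists_adj u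
  obtain ⟨v', hv⟩ := exists_adj v
  have huv' : ¬ G.Reachable u v' := fun h => huv (h.trans hv.symm.reachable)
  have hu'v' : ¬ G.Reachable u' v' := fun h => huv' (hu.reachable.trans h)
  have ne_of_not_reachable {a b : V} (h : ¬ G.Reachable a b) : a ≠ b := by
    rintro rfl
    exact h .rfl
  refine ⟨edgeSwitch G u u' v v', fun w => ?_, ?_, ?_⟩
  · rw [ncard_neighborSet_edgeSwitch hu hv (mt Adj.reachable huv) (mt Adj.reachable hu'v')
      (ne_of_not_reachable huv) (ne_of_not_reachable hu'v'), hG]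
  · exact reachable_edgeSwitch (hG.not_isBridge hu) (hG.not_isBridge hv) huv
  · have hshortcut : c s(u', v') ≤ c s(u, u') + c s(u, v) + c s(v, v') :=
      calc c s(u', v') ≤ c s(u', u) + c s(u, v') :=
            htri u' u v' hu.ne' (ne_of_not_reachable huv') (ne_of_not_reachable hu'v')
        _ ≤ c s(u', u) + (c s(u, v) + c s(v, v')) := by
            gcongr
            exact htri u v v' (ne_of_not_reachable huv) hv.ne (ne_of_not_reachable huv')
        _ = c s(u, u') + c s(u, v) + c s(v, v') := by rw [Sym2.eq_swap, add_assoc]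
    have hweight := graphWeight_edgeSwitch (c := c) hu hv (mt Adj.reachable huv)
      (mt Adj.reachable hu'v') (ne_of_not_reachable huv) (ne_of_not_reachable hu'v')
    linarith

lemma exists_isTwoRegular_card_connectedComponent_eq (hc : ∀ e, 0 ≤ c e)
    (htri : ∀ u v x : V, u ≠ v → v ≠ x → u ≠ x → c s(u, x) ≤ c s(u, v) + c s(v, x))
    {T : SimpleGraph V} {p : ℕ} (hG : IsTwoRegular G)
    (hGT : Nat.card (G ⊔ T).ConnectedComponent ≤ p) (hp : p ≤ Nat.card G.ConnectedComponent) :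
    ∃ H : SimpleGraph V, IsTwoRegular H ∧ Nat.card H.ConnectedComponent = p ∧
      graphWeight c H ≤ graphWeight c G + 2 * graphWeight c T := by
  obtain ⟨n, hn⟩ := Nat.exists_eq_add_of_le hp
  clear hp
  induction n generalizing G T with
  | zero =>
    have hT : 0 ≤ graphWeight c T := graphWeight_nonneg hc
    exact ⟨G, hG, hn, by linarith⟩
  | succ n ih =>
    obtain ⟨u, v, hT, huv⟩ := exists_adj_not_reachable_of_card_sup_lt (G := G) (T := T) (by omega)
    obtain ⟨K, hK, hreach, hKweight⟩ := exists_isTwoRegular_reachable_eq_sup_edge htri hG huv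
    have hcard : Nat.card K.ConnectedComponent = p + n := by
      have : Nat.card K.ConnectedComponent = Nat.card (G ⊔ edge u v).ConnectedComponent :=
        le_antisymm (card_connectedComponent_le_of_reachable_le hreach.ge)
          (card_connectedComponent_le_of_reachable_le hreach.le)
      have := card_connectedComponent_sup_edge huv
      omega
    obtain ⟨H, hH, hHcard, hHweight⟩ := ih (T := T.deleteEdges {s(u, v)}) hK
      ((card_connectedComponent_le_of_reachable_le
        (reachable_sup_le_sup_deleteEdges hreach.ge)).trans hGT) hcard
    have hTweight : graphWeight c (T.deleteEdges {s(u, v)}) + c s(u, v) = graphWeight c T :=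
      graphWeight_deleteEdges_singleton hT
    exact ⟨H, hH, hHcard, by linarith⟩

end Merging

section Subgraph

variable {V : Type*} {G : SimpleGraph V} {A B : G.Subgraph}

lemma card_connectedComponent_coe_of_isSpanning (hA : A.IsSpanning) :
    Nat.card A.coe.ConnectedComponent = Nat.card A.spanningCoe.ConnectedComponent :=
  Nat.card_congr (A.spanningCoeEquivCoeOfSpanning hA).connectedComponentEquiv.symm

lemma card_connectedComponent_coe_le_of_le [Finite V] (hA : A.IsSpanning) (h : A ≤ B) :
    Nat.card B.coe.ConnectedComponent ≤ Nat.card A.coe.ConnectedComponent := by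
  rw [card_connectedComponent_coe_of_isSpanning hA,
    card_connectedComponent_coe_of_isSpanning fun v => h.1 (hA v)]
  exact ConnectedComponent.card_le_card_of_le (Subgraph.spanningCoe_le_of_le h)

end Subgraph

theorem merge_case_q_gt_p_general {V : Type*} [Finite V] (c : Sym2 V → ℝ) (hc : ∀ e, 0 ≤ c e)
    (htri : ∀ u v x : V, u ≠ v → v ≠ x → u ≠ x → c s(u, x) ≤ c s(u, v) + c s(v, x))
    (F T : (⊤ : SimpleGraph V).Subgraph) (p : ℕ) (hF : IsTwoFactor F)
    (hFT : Nat.card (F ⊔ T).coe.ConnectedComponent ≤ p)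
    (hpF : p ≤ Nat.card F.coe.ConnectedComponent) :
    ∃ H : (⊤ : SimpleGraph V).Subgraph, IsHpMedianSolution p H ∧
      subgraphWeight c H ≤ subgraphWeight c F + 2 * subgraphWeight c T := by
  have hFTspan : (F ⊔ T).IsSpanning := fun v => .inl (hF.1 v)
  rw [card_connectedComponent_coe_of_isSpanning hFTspan] at hFT
  rw [card_connectedComponent_coe_of_isSpanning hF.1] at hpF
  obtain ⟨H, hH, hHcard, hHweight⟩ := exists_isTwoRegular_card_connectedComponent_eq
    (G := F.spanningCoe) (T := T.spanningCoe) hc htri hF.2 hFT hpF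
  have hspan : (toSubgraph H le_top).IsSpanning := toSubgraph.isSpanning H le_top
  exact ⟨toSubgraph H le_top,
    ⟨⟨hspan, hH⟩, (card_connectedComponent_coe_of_isSpanning hspan).trans hHcard⟩, hHweight⟩

/-- in a complete graph with nonnegative weights satisfying the triangle
inequality, given a 2-factor `F` with `q` cycles and a spanning forest `T` with exactly
`p` components, `1 ≤ p ≤ q`, there is a Hamiltonian `p`-median solution of weight at
most `c(F) + 2c(T)`. -/
theorem merge_case_q_gt_p {V : Type*} [Fintype V] (c : Sym2 V → ℝ)
    (hc : ∀ e, 0 ≤ c e)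
    (htri : ∀ u v x : V, u ≠ v → v ≠ x → u ≠ x → c s(u, x) ≤ c s(u, v) + c s(v, x))
    (F T : (⊤ : SimpleGraph V).Subgraph) (q p : ℕ)
    (hF : IsTwoFactor F) (hFq : Nat.card F.coe.ConnectedComponent = q)
    (hTspan : T.IsSpanning) (hTacyc : T.coe.IsAcyclic)
    (hTp : Nat.card T.coe.ConnectedComponent = p)
    (hp1 : 1 ≤ p) (hpq : p ≤ q) :
    ∃ H : (⊤ : SimpleGraph V).Subgraph, IsHpMedianSolution p H ∧
      subgraphWeight c H ≤ subgraphWeight c F + 2 * subgraphWeight c T := by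
  exact merge_case_q_gt_p_general c hc htri F T p hF
    ((card_connectedComponent_coe_le_of_le hTspan le_sup_right).trans_eq hTp)
    (hpq.trans_eq hFq.symm)
end

section
/- Let K_V be the complete graph on a finite vertex set V with n = |V| vertices and nonnegative edge weights c satisfying the triangle inequality. Let F be a 2-factor of K_V with q cycles and let p be an integer with q ≤ p ≤ ⌈(n − 2⌈n/5⌉)/3⌉. Then there exists a Hamiltonian p-median solution of K_V with total weight at most 2·c(F). -/
open SimpleGraph

/-!
Deleting an edge from each cycle of `F` leaves a partition of `V` into paths of total weight at most
`c(F)`. Cutting a path with at least six vertices after its third vertex only lowers the weight and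
yields one path more, still with at least three vertices on each, and leaves the sum
`∑ ⌊|P| / 3⌋` over the paths unchanged. So every number of paths from `q` up to `∑ ⌊|C| / 3⌋`,
the sum over the cycles of `F`, is attained. Finally, by the triangle inequality the edge that
closes a path to a cycle weighs at most as much as the path, so closing all paths at most doubles
the weight.

The cycles obtained from the paths are those of one permutation of `V`, which reduces counting
components to its cycle type. The bound `⌈(n - 2⌈n/5⌉) / 3⌉` on `p` enters only through
`5 * p < n + 5`, which forces `p ≤ ∑ ⌊|C| / 3⌋` because every cycle has at least three vertices.
-/

section PathWeight

variable {V : Type*} (c : Sym2 V → ℝ)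

/-- The weight of the path that visits the entries of `l` in order. -/
def pathWeight (l : List V) : ℝ :=
  ((l.zipWith (s(·, ·)) l.tail).map c).sum

@[simp]
lemma pathWeight_nil : pathWeight c [] = 0 := rfl

@[simp]
lemma pathWeight_singleton (v : V) : pathWeight c [v] = 0 := rfl

@[simp]
lemma pathWeight_cons_cons (u v : V) (l : List V) :
    pathWeight c (u :: v :: l) = c s(u, v) + pathWeight c (v :: l) := by
  simp [pathWeight]

lemma pathWeight_support {G : SimpleGraph V} {u v : V} (w : G.Walk u v) :
    pathWeight c w.support = (w.edges.map c).sum := by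
  rw [Walk.edges_eq_zipWith_support, pathWeight]

variable {c}

lemma pathWeight_add_pathWeight_le_append (hc : ∀ e, 0 ≤ c e) (l l' : List V) :
    pathWeight c l + pathWeight c l' ≤ pathWeight c (l ++ l') := by
  induction l with
  | nil => simp
  | cons u l ih =>
    match l, l' with
    | [], [] => simp
    | [], v :: l' => simp [hc]
    | v :: l, l' =>
      simp only [List.cons_append, pathWeight_cons_cons] at ih ⊢
      linarith

lemma weight_getLast_le_pathWeight
    (htri : ∀ u v x : V, u ≠ v → v ≠ x → u ≠ x → c s(u, x) ≤ c s(u, v) + c s(v, x))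
    {u v : V} {l : List V} (hl : (u :: v :: l).Nodup) :
    c s(u, (v :: l).getLast (List.cons_ne_nil v l)) ≤ pathWeight c (u :: v :: l) := by
  induction l generalizing u v with
  | nil => simp
  | cons x l ih =>
    set z := (v :: x :: l).getLast (List.cons_ne_nil v _) with hz
    have hz' : z ∈ x :: l := by
      rw [hz, List.getLast_cons_cons]
      exact List.getLast_mem _
    have huvz : c s(u, z) ≤ c s(u, v) + c s(v, z) := by
      apply htri <;> grind
    have hvz : c s(v, z) ≤ pathWeight c (v :: x :: l) := ih hl.of_cons
    rw [pathWeight_cons_cons]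
    linarith

lemma map_formPerm_eq_rotate_one [DecidableEq V] {l : List V} (hl : l.Nodup) :
    l.map l.formPerm = l.rotate 1 :=
  List.ext_getElem (by simp) fun i hi _ => by
    rw [List.getElem_map, List.formPerm_apply_getElem l hl i (by simpa using hi),
      List.getElem_rotate]

lemma sum_zipWith_concat (u v : V) (l : List V) :
    (((u :: l).zipWith (s(·, ·)) (l ++ [v])).map c).sum =
      pathWeight c (u :: l) + c s((u :: l).getLast (List.cons_ne_nil u l), v) := by
  induction l generalizing u with
  | nil => simp
  | cons x l ih =>
    simp only [List.cons_append, List.zipWith_cons_cons, List.map_cons, List.sum_cons, ih,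
      pathWeight_cons_cons, List.getLast_cons_cons, add_assoc]

lemma sum_formPerm_eq_pathWeight_add [DecidableEq V] {u : V} {l : List V} (hl : (u :: l).Nodup) :
    ((u :: l).map fun v => c s(v, (u :: l).formPerm v)).sum =
      pathWeight c (u :: l) + c s((u :: l).getLast (List.cons_ne_nil u l), u) := by
  have hedges : (u :: l).map (fun v => s(v, (u :: l).formPerm v)) =
      (u :: l).zipWith (s(·, ·)) (l ++ [u]) := by
    rw [← List.zipWith_self (f := fun v w => s(v, (u :: l).formPerm w)),
      ← List.zipWith_map_right (f := (u :: l).formPerm), map_formPerm_eq_rotate_one hl,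
      List.rotate_cons_succ, List.rotate_zero]
  rw [← sum_zipWith_concat, ← hedges, List.map_map]
  rfl

lemma sum_formPerm_le_two_mul_pathWeight [DecidableEq V]
    (htri : ∀ u v x : V, u ≠ v → v ≠ x → u ≠ x → c s(u, x) ≤ c s(u, v) + c s(v, x))
    {l : List V} (hl : l.Nodup) (hlen : 2 ≤ l.length) :
    (l.map fun v => c s(v, l.formPerm v)).sum ≤ 2 * pathWeight c l := by
  match l, hlen with
  | u :: v :: l, _ =>
    have hclose := weight_getLast_le_pathWeight htri hl
    rw [Sym2.eq_swap] at hclose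
    rw [sum_formPerm_eq_pathWeight_add hl, List.getLast_cons_cons]
    linarith

end PathWeight

section PermGraph

variable {V : Type*}

/-- The functional graph of a permutation: every vertex `v` is joined to `σ v`. The cycles of `σ`
of length at least 3 become graph cycles. -/
def permGraph (σ : Equiv.Perm V) : SimpleGraph V :=
  fromRel fun u v => σ u = v

variable {σ : Equiv.Perm V}

lemma apply_ne_of_apply_apply_ne {v : V} (hv : σ (σ v) ≠ v) : σ v ≠ v :=
  fun h => hv (by rw [h, h])

lemma ncard_neighborSet_permGraph {v : V} (hv : σ (σ v) ≠ v) :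
    ((permGraph σ).neighborSet v).ncard = 2 := by
  have hv' := apply_ne_of_apply_apply_ne hv
  have hset : (permGraph σ).neighborSet v = {σ v, σ.symm v} := by
    ext w
    simp only [permGraph, mem_neighborSet, fromRel_adj, Set.mem_insert_iff, Set.mem_singleton_iff,
      Equiv.eq_symm_apply]
    grind
  rw [hset, Set.ncard_pair]
  rwa [ne_eq, Equiv.eq_symm_apply]

lemma reachable_permGraph_apply (v : V) : (permGraph σ).Reachable v (σ v) := by
  by_cases hv : σ v = v
  · rw [hv]
  · exact Adj.reachable ((fromRel_adj _ _ _).mpr ⟨Ne.symm hv, .inl rfl⟩)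

lemma reachable_permGraph_iff_sameCycle {u v : V} :
    (permGraph σ).Reachable u v ↔ σ.SameCycle u v := by
  constructor
  · rintro ⟨w⟩
    induction w with
    | nil => exact .refl σ _
    | cons h _ ih =>
      refine .trans ?_ ih
      rcases ((fromRel_adj _ _ _).mp h).2 with rfl | rfl
      · exact Equiv.Perm.sameCycle_apply_right.mpr (.refl σ _)
      · exact Equiv.Perm.sameCycle_apply_left.mpr (.refl σ _)
  · rintro ⟨k, rfl⟩
    induction k with
    | zero => rfl
    | succ k ih =>
      rw [add_comm, zpow_one_add, Equiv.Perm.mul_apply]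
      exact ih.trans (reachable_permGraph_apply _)
    | pred k ih =>
      refine ih.trans ?_
      have hback := (reachable_permGraph_apply (σ := σ) ((σ ^ (-(k : ℤ) - 1)) u)).symm
      rwa [← Equiv.Perm.mul_apply, ← zpow_one_add, add_sub_cancel] at hback

lemma card_connectedComponent_permGraph [Fintype V] [DecidableEq V] (hσ : ∀ v, σ v ≠ v) :
    Nat.card (permGraph σ).ConnectedComponent = σ.cycleType.card := by
  have hcycleOf (u v : V) : σ.cycleOf u = σ.cycleOf v ↔ (permGraph σ).Reachable u v := by
    rw [reachable_permGraph_iff_sameCycle, Equiv.Perm.sameCycle_iff_cycleOf_eq_of_mem_support] <;>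
      simp [hσ]
  let toCycle : (permGraph σ).ConnectedComponent → σ.cycleFactorsFinset :=
    ConnectedComponent.lift
      (fun v => ⟨σ.cycleOf v, Equiv.Perm.cycleOf_mem_cycleFactorsFinset_iff.mpr (by simp [hσ])⟩)
      fun u v w _ => Subtype.ext ((hcycleOf u v).mpr ⟨w⟩)
  have hbij : Function.Bijective toCycle := by
    constructor
    · refine ConnectedComponent.ind₂ fun u v h => ?_
      exact ConnectedComponent.sound ((hcycleOf u v).mp (congrArg Subtype.val h))
    · rintro ⟨τ, hτ⟩
      obtain ⟨v, hv⟩ := (Equiv.Perm.mem_cycleFactorsFinset_iff.mp hτ).1.nonempty_support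
      exact ⟨(permGraph σ).connectedComponentMk v,
        Subtype.ext (Equiv.Perm.cycle_is_cycleOf hv hτ).symm⟩
  rw [Nat.card_eq_of_bijective toCycle hbij, Equiv.Perm.cycleType_def]
  simp

/-- The permutation graph as a subgraph of the complete graph. -/
def permSubgraph (σ : Equiv.Perm V) : (⊤ : SimpleGraph V).Subgraph :=
  toSubgraph (permGraph σ) le_top

lemma isHpMedianSolution_permSubgraph [Fintype V] [DecidableEq V] (hσ : ∀ v, σ (σ v) ≠ v) :
    IsHpMedianSolution σ.cycleType.card (permSubgraph σ) := by
  have hspan : (permSubgraph σ).IsSpanning := toSubgraph.isSpanning _ le_top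
  refine ⟨⟨hspan, fun v => ncard_neighborSet_permGraph (hσ v)⟩, ?_⟩
  rw [← card_connectedComponent_permGraph fun v => apply_ne_of_apply_apply_ne (hσ v)]
  exact Nat.card_congr
    (Subgraph.spanningCoeEquivCoeOfSpanning _ hspan).connectedComponentEquiv.symm

lemma subgraphWeight_permSubgraph [Fintype V] (c : Sym2 V → ℝ) (hσ : ∀ v, σ (σ v) ≠ v) :
    subgraphWeight c (permSubgraph σ) = ∑ v, c s(v, σ v) := by
  have hedge : (permSubgraph σ).edgeSet = Set.range fun v => s(v, σ v) := by
    ext e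
    induction e with | h u v
    have := apply_ne_of_apply_apply_ne (hσ u)
    have := apply_ne_of_apply_apply_ne (hσ v)
    simp only [Subgraph.mem_edgeSet, permSubgraph, toSubgraph_adj, permGraph, fromRel_adj,
      Set.mem_range, Sym2.eq_iff]
    grind
  have hinj : Function.Injective fun v => s(v, σ v) := fun u v h => by
    have := hσ u
    simp only [Sym2.eq_iff] at h
    grind
  rw [subgraphWeight, hedge, finsum_mem_range hinj, finsum_eq_sum_of_fintype]

end PermGraph

section PathPartition

variable {V : Type*}

/-- A partition of the vertex set into paths of a complete graph with at least three vertices each,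
every path being given by the list of its vertices. -/
structure IsPathPartition (L : List (List V)) : Prop where
  nodup : L.flatten.Nodup
  mem_flatten : ∀ v, v ∈ L.flatten
  three_le_length : ∀ l ∈ L, 3 ≤ l.length

lemma formPerm_apply_apply_ne [DecidableEq V] {l : List V} (hl : l.Nodup) (hlen : 3 ≤ l.length)
    {v : V} (hv : v ∈ l) : l.formPerm (l.formPerm v) ≠ v := by
  obtain ⟨i, hi, rfl⟩ := List.mem_iff_getElem.mp hv
  rw [List.formPerm_apply_getElem l hl, List.formPerm_apply_getElem l hl, ne_eq,
    hl.getElem_inj_iff, Nat.mod_add_mod]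
  rcases lt_or_ge (i + 1 + 1) l.length with h | h
  · rw [Nat.mod_eq_of_lt h]
    omega
  · rw [Nat.mod_eq_sub_mod h, Nat.mod_eq_of_lt (by omega)]
    omega

namespace IsPathPartition

variable {L : List (List V)} {c : Sym2 V → ℝ}

section Close

variable [DecidableEq V]

lemma pairwise_disjoint_formPerm (hL : IsPathPartition L) :
    (L.map List.formPerm).Pairwise Equiv.Perm.Disjoint := by
  obtain ⟨hnodup, hdisj⟩ := List.nodup_flatten.mp hL.nodup
  refine List.pairwise_map.mpr (hdisj.imp_of_mem fun {l l'} hl hl' h => ?_)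
  have := hL.three_le_length l hl
  have := hL.three_le_length l' hl'
  exact (List.formPerm_disjoint_iff (hnodup l hl) (hnodup l' hl') (by omega) (by omega)).mpr h

lemma prod_formPerm_apply [Finite V] (hL : IsPathPartition L) {l : List V} (hl : l ∈ L) {v : V}
    (hv : v ∈ l) : (L.map List.formPerm).prod v = l.formPerm v := by
  cases nonempty_fintype V
  have hlen := hL.three_le_length l hl
  refine (Equiv.Perm.eq_on_support_mem_disjoint (List.mem_map_of_mem hl)
    hL.pairwise_disjoint_formPerm v ?_).symm
  rw [Equiv.Perm.mem_support, List.formPerm_apply_mem_ne_self_iff l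
    ((List.nodup_flatten.mp hL.nodup).1 l hl) v hv]
  omega

lemma prod_formPerm_apply_apply_ne [Finite V] (hL : IsPathPartition L) (v : V) :
    (L.map List.formPerm).prod ((L.map List.formPerm).prod v) ≠ v := by
  obtain ⟨l, hl, hv⟩ := List.mem_flatten.mp (hL.mem_flatten v)
  rw [hL.prod_formPerm_apply hl hv,
    hL.prod_formPerm_apply hl (List.formPerm_apply_mem_of_mem hv)]
  exact formPerm_apply_apply_ne ((List.nodup_flatten.mp hL.nodup).1 l hl)
    (hL.three_le_length l hl) hv

lemma card_cycleType_prod_formPerm [Fintype V] (hL : IsPathPartition L) :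
    (L.map List.formPerm).prod.cycleType.card = L.length := by
  have hcycle : ∀ σ ∈ L.map List.formPerm, σ.IsCycle := by
    refine List.forall_mem_map.mpr fun l hl => ?_
    have := hL.three_le_length l hl
    exact List.isCycle_formPerm ((List.nodup_flatten.mp hL.nodup).1 l hl) (by omega)
  rw [Equiv.Perm.cycleType_eq _ rfl hcycle hL.pairwise_disjoint_formPerm]
  simp

end Close

lemma sum_univ_eq_sum_map [Fintype V] (hL : IsPathPartition L) (f : V → ℝ) :
    ∑ v, f v = (L.map fun l => (l.map f).sum).sum := by
  classical
  have huniv : L.flatten.toFinset = Finset.univ := by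
    ext v
    simpa using hL.mem_flatten v
  rw [← huniv, List.sum_toFinset f hL.nodup, List.map_flatten, List.sum_flatten, List.map_map]
  rfl

theorem exists_isHpMedianSolution [Finite V] (hL : IsPathPartition L)
    (htri : ∀ u v x : V, u ≠ v → v ≠ x → u ≠ x → c s(u, x) ≤ c s(u, v) + c s(v, x)) :
    ∃ H : (⊤ : SimpleGraph V).Subgraph, IsHpMedianSolution L.length H ∧
      subgraphWeight c H ≤ 2 * (L.map (pathWeight c)).sum := by
  classical
  cases nonempty_fintype V
  set σ := (L.map List.formPerm).prod with hσ
  refine ⟨permSubgraph σ, ?_, ?_⟩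
  · rw [← hL.card_cycleType_prod_formPerm]
    exact isHpMedianSolution_permSubgraph hL.prod_formPerm_apply_apply_ne
  · rw [subgraphWeight_permSubgraph c hL.prod_formPerm_apply_apply_ne, hL.sum_univ_eq_sum_map,
      ← List.sum_map_mul_left]
    refine List.sum_le_sum fun l hl => ?_
    have hlen := hL.three_le_length l hl
    have happly : l.map (fun v => c s(v, σ v)) = l.map fun v => c s(v, l.formPerm v) :=
      List.map_congr_left fun v hv => by rw [hσ, hL.prod_formPerm_apply hl hv]
    rw [← hσ, happly]
    exact sum_formPerm_le_two_mul_pathWeight htri ((List.nodup_flatten.mp hL.nodup).1 l hl)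
      (by omega)

lemma exists_split (hL : IsPathPartition L) (hc : ∀ e, 0 ≤ c e)
    (hlt : L.length < (L.map (·.length / 3)).sum) :
    ∃ L' : List (List V), IsPathPartition L' ∧ L'.length = L.length + 1 ∧
      (L'.map (·.length / 3)).sum = (L.map (·.length / 3)).sum ∧
      (L'.map (pathWeight c)).sum ≤ (L.map (pathWeight c)).sum := by
  obtain ⟨l, hl, hlen⟩ : ∃ l ∈ L, 6 ≤ l.length := by
    by_contra! hshort
    have hle : (L.map (·.length / 3)).sum ≤ (L.map fun _ => 1).sum :=
      List.sum_le_sum fun l hl => by have := hshort l hl; omega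
    simp only [List.map_const', List.sum_replicate, smul_eq_mul, mul_one] at hle
    omega
  obtain ⟨L₁, L₂, rfl⟩ := List.append_of_mem hl
  have hflatten :
      (L₁ ++ l.take 3 :: l.drop 3 :: L₂).flatten = (L₁ ++ l :: L₂).flatten := by
    simp [← List.append_assoc (l.take 3)]
  refine ⟨L₁ ++ l.take 3 :: l.drop 3 :: L₂, ⟨?_, ?_, ?_⟩, ?_, ?_, ?_⟩
  · exact hflatten ▸ hL.nodup
  · exact hflatten ▸ hL.mem_flatten
  · have := hL.three_le_length
    simp only [List.forall_mem_append, List.forall_mem_cons, List.length_take,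
      List.length_drop] at this ⊢
    exact ⟨this.1, by omega, by omega, this.2.2⟩
  · simp only [List.length_append, List.length_cons]
    omega
  · simp only [List.map_append, List.map_cons, List.sum_append, List.sum_cons, List.length_take,
      List.length_drop]
    omega
  · have hsplit := pathWeight_add_pathWeight_le_append hc (l.take 3) (l.drop 3)
    rw [List.take_append_drop] at hsplit
    simp only [List.map_append, List.map_cons, List.sum_append, List.sum_cons]
    linarith

lemma exists_length_eq (hL : IsPathPartition L) (hc : ∀ e, 0 ≤ c e) {p : ℕ}
    (hp : L.length ≤ p) (hpL : p ≤ (L.map (·.length / 3)).sum) :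
    ∃ L' : List (List V), IsPathPartition L' ∧ L'.length = p ∧
      (L'.map (pathWeight c)).sum ≤ (L.map (pathWeight c)).sum := by
  obtain ⟨k, rfl⟩ := Nat.exists_eq_add_of_le hp
  induction k generalizing L with
  | zero => exact ⟨L, hL, rfl, le_rfl⟩
  | succ k ih =>
    obtain ⟨L₁, hL₁, hlen, hthird, hweight⟩ := hL.exists_split hc (by omega)
    obtain ⟨L₂, hL₂, hlen₂, hweight₂⟩ := ih hL₁ (by omega) (by omega)
    exact ⟨L₂, hL₂, by omega, hweight₂.trans hweight⟩

end IsPathPartition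

end PathPartition

section TwoFactor

variable {V : Type*}

lemma exists_isPath_mem_support_iff [Finite V] {G : SimpleGraph V}
    (hG : ∀ v, (G.neighborSet v).ncard = 2) (C : G.ConnectedComponent) :
    ∃ (u v : V) (w : G.Walk u v), w.IsPath ∧ ∀ x, x ∈ w.support ↔ x ∈ C.supp := by
  induction C using ConnectedComponent.ind with | h v
  have hcycles : G.IsCycles := fun v _ => hG v
  obtain ⟨w, hw, hsupp⟩ := hcycles.exists_cycle_toSubgraph_verts_eq_connectedComponentSupp
    (v := v) rfl (Set.nonempty_of_ncard_ne_zero (by rw [hG v]; norm_num))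
  refine ⟨_, _, w.tail, hw.isPath_tail, fun x => ?_⟩
  rw [← hsupp, Walk.mem_verts_toSubgraph, w.support_tail_of_not_nil hw.not_nil]
  refine ⟨List.mem_of_mem_tail, fun hx => ?_⟩
  rcases (Walk.mem_support_iff w).mp hx with rfl | hx
  · exact Walk.end_mem_tail_support hw.not_nil
  · exact hx

lemma three_le_ncard_supp [Finite V] {G : SimpleGraph V}
    (hG : ∀ v, (G.neighborSet v).ncard = 2) (C : G.ConnectedComponent) : 3 ≤ C.supp.ncard := by
  induction C using ConnectedComponent.ind with | h v
  calc 3 = (insert v (G.neighborSet v)).ncard := by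
        rw [Set.ncard_insert_of_notMem (s := G.neighborSet v) G.irrefl, hG]
    _ ≤ (G.connectedComponentMk v).supp.ncard := Set.ncard_le_ncard <|
        Set.insert_subset rfl fun w hw => ConnectedComponent.sound hw.symm.reachable

lemma sum_ncard_supp [Finite V] (G : SimpleGraph V) [Fintype G.ConnectedComponent] :
    ∑ C : G.ConnectedComponent, C.supp.ncard = Nat.card V := by
  rw [← Nat.card_congr (Equiv.sigmaFiberEquiv G.connectedComponentMk), Nat.card_sigma]
  rfl

lemma sum_pathWeight_support_le [Finite V] {ι : Type*} [Fintype ι] {G : SimpleGraph V}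
    {c : Sym2 V → ℝ} (hc : ∀ e, 0 ≤ c e) {u v : ι → V} {w : ∀ i, G.Walk (u i) (v i)}
    (hpath : ∀ i, (w i).IsPath)
    (hdisj : Pairwise fun i j => List.Disjoint (w i).support (w j).support) :
    ∑ i, pathWeight c (w i).support ≤ ∑ᶠ e ∈ G.edgeSet, c e := by
  classical
  have hedges :
      ((Finset.univ : Finset ι) : Set ι).PairwiseDisjoint fun i => (w i).edges.toFinset := by
    intro i _ j _ hij
    refine Finset.disjoint_left.mpr fun e hi hj => ?_
    induction e with | h x y
    exact hdisj hij (Walk.fst_mem_support_of_mem_edges _ (List.mem_toFinset.mp hi))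
      (Walk.fst_mem_support_of_mem_edges _ (List.mem_toFinset.mp hj))
  calc ∑ i, pathWeight c (w i).support = ∑ i, ∑ e ∈ (w i).edges.toFinset, c e :=
        Finset.sum_congr rfl fun i _ => by
          rw [pathWeight_support, List.sum_toFinset _ (hpath i).isTrail.edges_nodup]
    _ = ∑ e ∈ Finset.univ.biUnion fun i => (w i).edges.toFinset, c e :=
        (Finset.sum_biUnion hedges).symm
    _ ≤ ∑ e ∈ G.edgeSet.toFinite.toFinset, c e := by
        refine Finset.sum_le_sum_of_subset_of_nonneg (fun e he => ?_) fun e _ _ => hc e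
        obtain ⟨i, -, he⟩ := Finset.mem_biUnion.mp he
        exact G.edgeSet.toFinite.mem_toFinset.mpr
          ((w i).edges_subset_edgeSet (List.mem_toFinset.mp he))
    _ = ∑ᶠ e ∈ G.edgeSet, c e := (finsum_mem_eq_finite_toFinset_sum c _).symm

lemma exists_isPathPartition [Finite V] {G : SimpleGraph V}
    (hG : ∀ v, (G.neighborSet v).ncard = 2) {c : Sym2 V → ℝ} (hc : ∀ e, 0 ≤ c e) :
    ∃ L : List (List V), IsPathPartition L ∧ L.length = Nat.card G.ConnectedComponent ∧
      (L.map (·.length / 3)).sum = ∑ᶠ C : G.ConnectedComponent, C.supp.ncard / 3 ∧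
      (L.map (pathWeight c)).sum ≤ ∑ᶠ e ∈ G.edgeSet, c e := by
  classical
  have := Fintype.ofFinite G.ConnectedComponent
  choose u v w hpath hmem using exists_isPath_mem_support_iff hG
  have hlen (C : G.ConnectedComponent) : (w C).support.length = C.supp.ncard := by
    rw [← List.toFinset_card_of_nodup (hpath C).support_nodup, ← Set.ncard_coe_finset]
    congr
    ext x
    simpa using hmem C x
  have hdisj : Pairwise fun C D => List.Disjoint (w C).support (w D).support :=
    fun C D hCD x hC hD => hCD (((hmem C x).mp hC).symm.trans ((hmem D x).mp hD))
  refine ⟨Finset.univ.toList.map fun C => (w C).support, ⟨?_, fun x => ?_, ?_⟩, ?_, ?_, ?_⟩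
  · refine List.nodup_flatten.mpr
      ⟨List.forall_mem_map.mpr fun C _ => (hpath C).support_nodup, List.pairwise_map.mpr ?_⟩
    exact (Finset.nodup_toList _).imp fun {C D} hCD => hdisj hCD
  · exact List.mem_flatten.mpr ⟨_, List.mem_map_of_mem (Finset.mem_toList.mpr (Finset.mem_univ _)),
      (hmem (G.connectedComponentMk x) x).mpr rfl⟩
  · exact List.forall_mem_map.mpr fun C _ => (three_le_ncard_supp hG C).trans_eq (hlen C).symm
  · rw [List.length_map, Finset.length_toList, Finset.card_univ, Nat.card_eq_fintype_card]
  · rw [List.map_map, Finset.sum_map_toList, finsum_eq_sum_of_fintype]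
    simp only [Function.comp_apply, hlen]
  · rw [List.map_map, Finset.sum_map_toList]
    exact sum_pathWeight_support_le hc hpath hdisj

lemma card_connectedComponent_coe {G : SimpleGraph V} {F : G.Subgraph} (hF : F.IsSpanning) :
    Nat.card F.coe.ConnectedComponent = Nat.card F.spanningCoe.ConnectedComponent :=
  Nat.card_congr (F.spanningCoeEquivCoeOfSpanning hF).connectedComponentEquiv.symm

lemma finsum_ncard_supp_coe {G : SimpleGraph V} {F : G.Subgraph} (hF : F.IsSpanning) (f : ℕ → ℕ) :
    ∑ᶠ C : F.coe.ConnectedComponent, f C.supp.ncard =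
      ∑ᶠ C : F.spanningCoe.ConnectedComponent, f C.supp.ncard := by
  let φ := F.spanningCoeEquivCoeOfSpanning hF
  refine (finsum_eq_of_bijective φ.connectedComponentEquiv φ.connectedComponentEquiv.bijective
    fun C => ?_).symm
  exact congrArg f (Nat.card_congr (ConnectedComponent.isoEquivSupp φ C))

end TwoFactor

section Bound

-- Rounding loses at most 2 per part. Hence if `p` exceeded the sum `s`, then `|ι| ≤ s ≤ p - 1`
-- would give `∑ i, m i ≤ 3 * s + 2 * |ι| ≤ 5 * (p - 1)`.
lemma le_sum_div_three {ι : Type*} [Fintype ι] {m : ι → ℕ} (hm : ∀ i, 3 ≤ m i) {p : ℕ}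
    (hp : 5 * p < ∑ i, m i + 5) : p ≤ ∑ i, m i / 3 := by
  have hcard : Fintype.card ι ≤ ∑ i, m i / 3 := by
    simpa using Finset.card_nsmul_le_sum Finset.univ (fun i => m i / 3) 1
      fun i _ => by have := hm i; omega
  have hround : ∑ i, m i ≤ 3 * ∑ i, m i / 3 + 2 * Fintype.card ι := by
    calc ∑ i, m i ≤ ∑ i, (3 * (m i / 3) + 2) := Finset.sum_le_sum fun i _ => by omega
      _ = 3 * ∑ i, m i / 3 + 2 * Fintype.card ι := by
        simp [Finset.sum_add_distrib, Finset.mul_sum, mul_comm]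
  omega

lemma five_mul_lt_of_le_ceil {n p : ℕ}
    (h : (p : ℤ) ≤ ⌈((n : ℚ) - 2 * (⌈(n : ℚ) / 5⌉ : ℚ)) / 3⌉) : 5 * p < n + 5 := by
  have hp : (p : ℚ) - 1 < ((n : ℚ) - 2 * (⌈(n : ℚ) / 5⌉ : ℚ)) / 3 := by
    have := Int.le_ceil_iff.mp h
    exact_mod_cast this
  have hceil := Int.le_ceil ((n : ℚ) / 5)
  have : (5 * p : ℚ) < n + 5 := by linarith
  exact_mod_cast this

lemma IsTwoFactor.le_finsum_ncard_supp_div_three {V : Type*} [Finite V] {G : SimpleGraph V}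
    {F : G.Subgraph} (hF : IsTwoFactor F) {p : ℕ} (hp : 5 * p < Nat.card V + 5) :
    p ≤ ∑ᶠ C : F.coe.ConnectedComponent, C.supp.ncard / 3 := by
  have := Fintype.ofFinite F.spanningCoe.ConnectedComponent
  rw [finsum_ncard_supp_coe hF.1 (· / 3), finsum_eq_sum_of_fintype]
  exact le_sum_div_three (three_le_ncard_supp hF.2) (by rwa [sum_ncard_supp])

end Bound

theorem split_case_q_lt_p_general {V : Type*} [Finite V] (c : Sym2 V → ℝ) (hc : ∀ e, 0 ≤ c e)
    (htri : ∀ u v x : V, u ≠ v → v ≠ x → u ≠ x → c s(u, x) ≤ c s(u, v) + c s(v, x))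
    (F : (⊤ : SimpleGraph V).Subgraph) (p : ℕ) (hF : IsTwoFactor F)
    (hqp : Nat.card F.coe.ConnectedComponent ≤ p)
    (hpb : p ≤ ∑ᶠ C : F.coe.ConnectedComponent, C.supp.ncard / 3) :
    ∃ H : (⊤ : SimpleGraph V).Subgraph, IsHpMedianSolution p H ∧
      subgraphWeight c H ≤ 2 * subgraphWeight c F := by
  obtain ⟨L, hL, hlen, hthird, hweight⟩ := exists_isPathPartition (G := F.spanningCoe) hF.2 hc
  rw [card_connectedComponent_coe hF.1, ← hlen] at hqp
  rw [finsum_ncard_supp_coe hF.1 (· / 3), ← hthird] at hpb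
  obtain ⟨L', hL', rfl, hweight'⟩ := hL.exists_length_eq hc hqp hpb
  obtain ⟨H, hH, hHweight⟩ := hL'.exists_isHpMedianSolution htri
  refine ⟨H, hH, hHweight.trans ?_⟩
  rw [Subgraph.edgeSet_spanningCoe] at hweight
  gcongr
  exact hweight'.trans hweight

/-- in a complete graph on `n` vertices with nonnegative weights
satisfying the triangle inequality, given a 2-factor `F` with `q` cycles and an integer
`p` with `q ≤ p ≤ ⌈(n - 2⌈n/5⌉)/3⌉`, there is a Hamiltonian `p`-median solution of
weight at most `2c(F)`. -/
theorem split_case_q_lt_p {V : Type*} [Fintype V] (n : ℕ) (hn : Fintype.card V = n)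
    (c : Sym2 V → ℝ) (hc : ∀ e, 0 ≤ c e)
    (htri : ∀ u v x : V, u ≠ v → v ≠ x → u ≠ x → c s(u, x) ≤ c s(u, v) + c s(v, x))
    (F : (⊤ : SimpleGraph V).Subgraph) (q p : ℕ)
    (hF : IsTwoFactor F) (hFq : Nat.card F.coe.ConnectedComponent = q)
    (hqp : q ≤ p) (hpb : (p : ℤ) ≤ ⌈((n : ℚ) - 2 * (⌈(n : ℚ) / 5⌉ : ℚ)) / 3⌉) :
    ∃ H : (⊤ : SimpleGraph V).Subgraph, IsHpMedianSolution p H ∧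
      subgraphWeight c H ≤ 2 * subgraphWeight c F := by
  subst hn hFq
  rw [← Nat.card_eq_fintype_card] at hpb
  exact split_case_q_lt_p_general c hc htri F p hF hqp
    (hF.le_finsum_ncard_supp_div_three (five_mul_lt_of_le_ceil hpb))
end
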